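/- arXiv:1109.4774 — 2 statements merged into one kernel-verified Lean document; each statement's English description precedes it below -/
import Mathlib

section
/- Let V be a seven-dimensional real vector space, let e₁,…,e₇ be a basis of V with dual basis e¹,…,e⁷, and let Ψ := e^{1234}−e^{1256}−e^{3456}−e^{2467}+e^{2357}+e^{1457}+e^{1367} ∈ Λ⁴V* (the Hodge dual of a G₂*-structure for which e₁,…,e₇ is an adapted basis). Let vol := e^{1234567}, let X ∈ Λ⁷V be the seven-vector with vol(X) = 1, set Z := Ψ ⌟ X ∈ Λ³V, and define the symmetric bilinear form g on V* by 6·g(β,γ)·X = (β ⌟ Z)∧(γ ⌟ Z)∧Z for β,γ ∈ V*. Then for every nonzero α ∈ V* and every complement U of span(α) in V*, the unique forms Ω ∈ Λ⁴U and ρ ∈ Λ³U with Ψ = Ω + ρ∧α satisfy: l(Ω) = 2 if and only if g(α,α) = 0. -/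
open Module

section Machinery

variable {F : Type*} [Field F] {M : Type*} [AddCommGroup M] [Module F M]

/-- `X` is a decomposable `k`-vector, with factors taken from the ambient subspace `A`. -/
def Dec (A : Submodule F M) (k : ℕ) (X : ExteriorAlgebra F M) : Prop :=
  ∃ v : Fin k → M, (∀ i, v i ∈ A) ∧ X = (List.ofFn fun i => ExteriorAlgebra.ι F (v i)).prod

/-- `X` is a sum of `l` decomposable `k`-vectors with factors from `A`. -/
def LenLE (A : Submodule F M) (k l : ℕ) (X : ExteriorAlgebra F M) : Prop :=
  ∃ Y : Fin l → ExteriorAlgebra F M, (∀ i, Dec A k (Y i)) ∧ X = ∑ i, Y i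

/-- `X` has (irreducible) length `l` as a `k`-vector: it is a sum of `l` decomposable
`k`-vectors, and of no smaller number of them. -/
def HasLen (A : Submodule F M) (k l : ℕ) (X : ExteriorAlgebra F M) : Prop :=
  LenLE A k l X ∧ ∀ j < l, ¬ LenLE A k j X

/-- The (irreducible) length of the `k`-vector `X`. -/
noncomputable def len (A : Submodule F M) (k : ℕ) (X : ExteriorAlgebra F M) : ℕ :=
  sInf {l | LenLE A k l X}

/-- `X` belongs to `Λ^k W`, regarded as a subspace of the exterior algebra. -/
def memPow (W : Submodule F M) (k : ℕ) (X : ExteriorAlgebra F M) : Prop :=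
  X ∈ (W.map (ExteriorAlgebra.ι F)) ^ k

/-- The support `[X]` of the `k`-vector `X`: the intersection of all subspaces `W`
with `X ∈ Λ^k W`. -/
noncomputable def supp (k : ℕ) (X : ExteriorAlgebra F M) : Submodule F M :=
  sInf {W | memPow W k X}

/-- The rank `ρ(X) = dim [X]` of the `k`-vector `X`. -/
noncomputable def rkInv (k : ℕ) (X : ExteriorAlgebra F M) : ℕ :=
  Module.finrank F (supp k X)

/-- `(v, W, X₁, X₂)` is an admissible splitting `X = X₁ ∧ v + X₂` of the `k`-vector `X`:
`v ∈ [X] ∖ {0}`, `W` is a complement of `span v` in `[X]`, `X₁ ∈ Λ^(k-1) W` and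
`X₂ ∈ Λ^k W`. -/
def Split (k : ℕ) (X : ExteriorAlgebra F M) (v : M) (W : Submodule F M)
    (X₁ X₂ : ExteriorAlgebra F M) : Prop :=
  v ∈ supp k X ∧ v ≠ 0 ∧
    W ⊔ Submodule.span F {v} = supp k X ∧ W ⊓ Submodule.span F {v} = ⊥ ∧
    memPow W (k - 1) X₁ ∧ memPow W k X₂ ∧
    X = X₁ * ExteriorAlgebra.ι F v + X₂

/-- The invariant `m(X) = min { l(X₁) }` over all admissible splittings of `X`. -/
noncomputable def mInv (A : Submodule F M) (k : ℕ) (X : ExteriorAlgebra F M) : ℕ :=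
  sInf {l | ∃ v W X₁ X₂, Split k X v W X₁ X₂ ∧ HasLen A (k - 1) l X₁}

/-- The invariant `r(X) = min { l(X₂) }` over all admissible splittings of `X`. -/
noncomputable def rInv (A : Submodule F M) (k : ℕ) (X : ExteriorAlgebra F M) : ℕ :=
  sInf {l | ∃ v W X₁ X₂, Split k X v W X₁ X₂ ∧ HasLen A k l X₂}

end Machinery

section Contraction

variable {V : Type*} [AddCommGroup V] [Module ℝ V]

/-- Interior product (contraction) of an element of the exterior algebra of `V`
with a covector `β ∈ V*`. -/
noncomputable def ctr1 (β : Module.Dual ℝ V) (Y : ExteriorAlgebra ℝ V) :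
    ExteriorAlgebra ℝ V :=
  CliffordAlgebra.contractLeft (Q := 0) β Y

/-- Contraction `(β₁ ∧ β₂ ∧ β₃ ∧ β₄) ⌟ Y` of `Y` with a decomposable four-form, pairing
the four-form against the first four slots of `Y`. -/
noncomputable def ctr4 (β₁ β₂ β₃ β₄ : Module.Dual ℝ V) (Y : ExteriorAlgebra ℝ V) :
    ExteriorAlgebra ℝ V :=
  ctr1 β₄ (ctr1 β₃ (ctr1 β₂ (ctr1 β₁ Y)))

/-- The wedge product `b i ∧ b j ∧ b k ∧ b l` of four covectors. -/
noncomputable def wedge4 (b : Fin 7 → Module.Dual ℝ V) (i j k l : Fin 7) :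
    ExteriorAlgebra ℝ (Module.Dual ℝ V) :=
  ExteriorAlgebra.ι ℝ (b i) * ExteriorAlgebra.ι ℝ (b j) *
    ExteriorAlgebra.ι ℝ (b k) * ExteriorAlgebra.ι ℝ (b l)

/-- The four-form `Ψ = e^{1234}-e^{1256}-e^{3456}-e^{2467}+e^{2357}+e^{1457}+e^{1367}`
(the Hodge dual of a `G₂*`-structure), with `0`-based indices. -/
noncomputable def PsiMinus (e : Fin 7 → Module.Dual ℝ V) :
    ExteriorAlgebra ℝ (Module.Dual ℝ V) :=
  wedge4 e 0 1 2 3 - wedge4 e 0 1 4 5 - wedge4 e 2 3 4 5 - wedge4 e 1 3 5 6 +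
    wedge4 e 1 2 4 6 + wedge4 e 0 3 4 6 + wedge4 e 0 2 5 6

/-- The contraction `Ψ ⌟ X` of a seven-vector `X` with the `G₂*`-form `Ψ` built from the
dual basis `e`, pairing each four-form term against the first four slots of `X`. -/
noncomputable def Zctr (e : Fin 7 → Module.Dual ℝ V) (X : ExteriorAlgebra ℝ V) :
    ExteriorAlgebra ℝ V :=
  ctr4 (e 0) (e 1) (e 2) (e 3) X - ctr4 (e 0) (e 1) (e 4) (e 5) X -
    ctr4 (e 2) (e 3) (e 4) (e 5) X - ctr4 (e 1) (e 3) (e 5) (e 6) X +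
    ctr4 (e 1) (e 2) (e 4) (e 6) X + ctr4 (e 0) (e 3) (e 4) (e 6) X +
    ctr4 (e 0) (e 2) (e 5) (e 6) X

end Contraction

/-!
Put `ω = α ⌟ Z = (Ω ∧ α) ⌟ X`. If `Ω` is a sum of `l` decomposable forms, then `ω` is a sum of `l`
commuting `2`-vectors of square zero, so `ω ^ (l + 1) = 0`. Since `α ⌟ (ω ∧ ω ∧ Z) = ω ^ 3` and
contraction by `α ≠ 0` is injective in top degree, `l = 2` forces `g(α, α) = 0`. Likewise `l < 2`
gives `ω ^ 2 = 0`, hence `α ⌟ (ω ∧ (γ ⌟ Z) ∧ Z) = 0` and `g(α, γ) = 0` for all `γ`, contradicting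
the nondegeneracy of `g`.

Rotations that preserve `Ψ` and the volume form bring `α` to the shape `r e¹ + s e⁵`, on which
`g(α, p e¹ + q e⁵) = s q - r p`: unit quaternions act on `e¹, …, e⁴` and fix the hyperkähler
triple through which these covectors enter `Ψ`, and rotations of `e⁵, e⁶, e⁷` are compensated by
rotations of that triple. If `α` is null, then `s = ±r`, and projecting `Ψ` to `U` along `α`
makes `e⁵` a multiple of `e¹`, which leaves a sum of two decomposable forms.
-/

section Involution

open CliffordAlgebra

variable {R M : Type*} [CommRing R] [AddCommGroup M] [Module R M]

theorem contractLeft_mul {Q : QuadraticForm R M} (d : Dual R M) (a b : CliffordAlgebra Q) :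
    contractLeft d (a * b) = contractLeft d a * b + involute a * contractLeft d b := by
  induction a using CliffordAlgebra.left_induction with
  | algebraMap r =>
    rw [contractLeft_algebraMap_mul, contractLeft_algebraMap, AlgHom.commutes, zero_mul, zero_add]
  | add x y hx hy => simp only [add_mul, map_add, hx, hy]; abel
  | ι_mul x m hx =>
    simp only [mul_assoc, contractLeft_ι_mul, hx, map_mul, involute_ι, mul_add, sub_mul,
      smul_mul_assoc, neg_mul]
    abel

theorem mul_ι_eq_ι_mul_involute (a : ExteriorAlgebra R M) (v : M) :
    a * ExteriorAlgebra.ι R v = ExteriorAlgebra.ι R v * involute a := by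
  induction a using CliffordAlgebra.left_induction with
  | algebraMap r => rw [AlgHom.commutes, Algebra.commutes]
  | add x y hx hy => simp only [map_add, add_mul, mul_add, hx, hy]
  | ι_mul x m hx =>
    have hswap : ι 0 m * ExteriorAlgebra.ι R v = -(ExteriorAlgebra.ι R v * ι 0 m) :=
      eq_neg_of_add_eq_zero_left (ExteriorAlgebra.ι_add_mul_swap m v)
    rw [mul_assoc, hx, ← mul_assoc, hswap, map_mul, involute_ι, neg_mul, neg_mul, mul_neg,
      mul_assoc]

theorem commute_of_involute_eq_self {a : ExteriorAlgebra R M} (ha : involute a = a)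
    (b : ExteriorAlgebra R M) : Commute a b := by
  induction b using CliffordAlgebra.left_induction with
  | algebraMap r => exact Algebra.commute_algebraMap_right r a
  | add x y hx hy => exact hx.add_right hy
  | ι_mul x m hx =>
    have hm : Commute a (ExteriorAlgebra.ι R m) := by
      rw [commute_iff_eq, mul_ι_eq_ι_mul_involute, ha]
    exact hm.mul_right hx

theorem involute_eq_smul_of_mem_exteriorPower {n : ℕ} {a : ExteriorAlgebra R M}
    (ha : a ∈ ⋀[R]^n M) : involute a = (-1 : R) ^ n • a := by
  rw [← ExteriorAlgebra.ιMulti_span_fixedDegree] at ha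
  induction ha using Submodule.span_induction with
  | mem _ hv =>
    obtain ⟨v, rfl⟩ := hv
    have h := involute_prod_map_ι (Q := (0 : QuadraticForm R M)) (List.ofFn v)
    rwa [List.map_ofFn, List.length_ofFn] at h
  | zero => simp
  | add _ _ _ _ hx hy => rw [map_add, hx, hy, smul_add]
  | smul r _ _ hx => rw [map_smul, hx, smul_comm]

theorem exteriorPower_succ_eq_mul (R M : Type*) [CommRing R] [AddCommGroup M] [Module R M] (n : ℕ) :
    ⋀[R]^(n + 1) M = LinearMap.range (ExteriorAlgebra.ι R (M := M)) * ⋀[R]^n M :=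
  pow_succ' _ n

theorem contractLeft_mem_exteriorPower (d : Dual R M) {n : ℕ} {a : ExteriorAlgebra R M}
    (ha : a ∈ ⋀[R]^(n + 1) M) : contractLeft d a ∈ ⋀[R]^n M := by
  induction n generalizing a with
  | zero =>
    obtain ⟨v, rfl⟩ : a ∈ LinearMap.range (ExteriorAlgebra.ι R) := by simpa using ha
    exact Submodule.mem_one.2 ⟨d v, (contractLeft_ι _ d v).symm⟩
  | succ n ih =>
    rw [exteriorPower_succ_eq_mul] at ha
    refine Submodule.mul_induction_on ha ?_ fun x y hx hy => ?_
    · rintro _ ⟨v, rfl⟩ y hy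
      refine (contractLeft_ι_mul d v y).symm ▸ sub_mem (Submodule.smul_mem _ _ hy) ?_
      rw [exteriorPower_succ_eq_mul]
      exact Submodule.mul_mem_mul ⟨v, rfl⟩ (ih hy)
    · rw [map_add]
      exact add_mem hx hy

end Involution

section Contract

open CliffordAlgebra

variable {R M : Type*} [CommRing R] [AddCommGroup M] [Module R M]

/-- The contraction `Φ ⌟ X` of a multivector `X` with a form `Φ`, pairing `Φ` against the first
slots of `X`. The first factor of a product `Φ ∧ Φ'` is contracted first, whence the opposite
algebra. -/
noncomputable def contract :
    ExteriorAlgebra R (Dual R M) →ₗ[R] Module.End R (ExteriorAlgebra R M) :=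
  (MulOpposite.opLinearEquiv R).symm.toLinearMap ∘ₗ AlgHom.toLinearMap
    (ExteriorAlgebra.lift R ⟨(MulOpposite.opLinearEquiv R).toLinearMap ∘ₗ contractLeft, fun d =>
      MulOpposite.unop_injective (LinearMap.ext fun X => contractLeft_contractLeft d X)⟩)

theorem contract_one (X : ExteriorAlgebra R M) : contract 1 X = X := by
  simp [contract]

theorem contract_ι (d : Dual R M) (X : ExteriorAlgebra R M) :
    contract (ExteriorAlgebra.ι R d) X = contractLeft d X := by
  simp [contract]

theorem contract_mul (Φ Φ' : ExteriorAlgebra R (Dual R M)) (X : ExteriorAlgebra R M) :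
    contract (Φ * Φ') X = contract Φ' (contract Φ X) := by
  simp [contract]

theorem contract_mem_exteriorPower {k n : ℕ} {Φ : ExteriorAlgebra R (Dual R M)}
    {X : ExteriorAlgebra R M} (hΦ : Φ ∈ ⋀[R]^k (Dual R M)) (hX : X ∈ ⋀[R]^(n + k) M) :
    contract Φ X ∈ ⋀[R]^n M := by
  induction k generalizing Φ X with
  | zero =>
    obtain ⟨r, rfl⟩ := Submodule.mem_one.1 hΦ
    rw [Algebra.algebraMap_eq_smul_one, map_smul, LinearMap.smul_apply, contract_one]
    exact Submodule.smul_mem _ r hX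
  | succ k ih =>
    rw [exteriorPower_succ_eq_mul] at hΦ
    refine Submodule.mul_induction_on hΦ ?_ fun Φ Φ' h h' => ?_
    · rintro _ ⟨d, rfl⟩ Φ' hΦ'
      rw [contract_mul, contract_ι]
      exact ih hΦ' (contractLeft_mem_exteriorPower d hX)
    · rw [map_add]
      exact add_mem h h'

theorem contract_ιMulti_mul_eq_zero {k : ℕ} {v : Fin k → Dual R M} {X η : ExteriorAlgebra R M}
    (hη : ∀ i, contractLeft (v i) η = 0) (h : X * η = 0) :
    contract (ExteriorAlgebra.ιMulti R k v) X * η = 0 := by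
  induction k generalizing X with
  | zero => rwa [ExteriorAlgebra.ιMulti_zero_apply, contract_one]
  | succ k ih =>
    rw [ExteriorAlgebra.ιMulti_succ_apply, contract_mul, contract_ι]
    refine ih (fun i => hη i.succ) ?_
    have hLeibniz := contractLeft_mul (v 0) X η
    rwa [h, hη 0, map_zero, mul_zero, add_zero, eq_comm] at hLeibniz

theorem contractLeft_contract_ιMulti {k : ℕ} (v : Fin k → Dual R M) (i : Fin k)
    (X : ExteriorAlgebra R M) :
    contractLeft (v i) (contract (ExteriorAlgebra.ιMulti R k v) X) = 0 := by
  have hmem : ExteriorAlgebra.ιMulti R k v ∈ ⋀[R]^k (Dual R M) :=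
    ExteriorAlgebra.ιMulti_range R k ⟨v, rfl⟩
  rw [← contract_ι, ← contract_mul, mul_ι_eq_ι_mul_involute,
    involute_eq_smul_of_mem_exteriorPower hmem, mul_smul_comm, ExteriorAlgebra.ιMulti_apply,
    ExteriorAlgebra.ι_mul_prod_list, smul_zero, map_zero, LinearMap.zero_apply]

end Contract

section TopDegree

open CliffordAlgebra

variable {K V : Type*} [Field K] [AddCommGroup V] [Module K V]

theorem ιMulti_basis_ne_zero {n : ℕ} (b : Basis (Fin n) K V) :
    ExteriorAlgebra.ιMulti K n b ≠ 0 := by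
  intro h
  have hdet := ExteriorAlgebra.liftAlternating_apply_ιMulti (Pi.single n b.det) b
  rw [h, map_zero, Pi.single_eq_same, b.det_self] at hdet
  exact zero_ne_one hdet

variable [FiniteDimensional K V]

theorem eq_zero_of_mem_exteriorPower_of_finrank_lt {n : ℕ} (hn : finrank K V < n)
    {a : ExteriorAlgebra K V} (ha : a ∈ ⋀[K]^n V) : a = 0 := by
  have hrank : finrank K (⋀[K]^n V) = 0 := by
    rw [exteriorPower.finrank_eq, Nat.choose_eq_zero_of_lt hn]
  rw [Submodule.finrank_eq_zero] at hrank
  rwa [hrank, Submodule.mem_bot] at ha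

theorem mul_eq_zero_of_finrank_lt {m n : ℕ} (h : finrank K V < m + n) {a b : ExteriorAlgebra K V}
    (ha : a ∈ ⋀[K]^m V) (hb : b ∈ ⋀[K]^n V) : a * b = 0 :=
  eq_zero_of_mem_exteriorPower_of_finrank_lt h (SetLike.mul_mem_graded ha hb)

theorem exists_eq_smul_ιMulti_basis {n : ℕ} (b : Basis (Fin n) K V) {a : ExteriorAlgebra K V}
    (ha : a ∈ ⋀[K]^n V) : ∃ t : K, a = t • ExteriorAlgebra.ιMulti K n b := by
  have hrank : finrank K (⋀[K]^n V) = 1 := by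
    rw [exteriorPower.finrank_eq, finrank_eq_card_basis b, Fintype.card_fin, Nat.choose_self]
  have hne : exteriorPower.ιMulti K n b ≠ 0 := fun h =>
    ιMulti_basis_ne_zero b (congrArg Subtype.val h)
  obtain ⟨t, ht⟩ := exists_smul_eq_of_finrank_eq_one hrank hne ⟨a, ha⟩
  exact ⟨t, (congrArg Subtype.val ht).symm⟩

theorem exists_basis_dualBasis_eq {n : ℕ} (hV : finrank K V = n) {f : Fin n → Dual K V}
    (hf : ExteriorAlgebra.ιMulti K n f ≠ 0) : ∃ b : Basis (Fin n) K V, ⇑b.dualBasis = f := by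
  have hli : LinearIndependent K f := by
    contrapose! hf
    exact AlternatingMap.map_linearDependent _ _ hf
  have hspan : ⊤ ≤ Submodule.span K (Set.range f) :=
    (hli.span_eq_top_of_card_eq_finrank' (by simp [hV])).ge
  let B := Basis.mk hli hspan
  let b := B.dualBasis.map (evalEquiv K V).symm
  refine ⟨b, funext fun i => b.ext fun j => ?_⟩
  rw [Basis.dualBasis_apply_self, Basis.map_apply, ← Basis.mk_apply hli hspan i,
    apply_evalEquiv_symm_apply, Basis.dualBasis_apply_self]
  simp only [eq_comm]

theorem contractLeft_injOn_top {d : Dual K V} (hd : d ≠ 0) {T : ExteriorAlgebra K V}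
    (hT : T ∈ ⋀[K]^(finrank K V) V) (h : contractLeft d T = 0) : T = 0 := by
  obtain ⟨v, hv⟩ := DFunLike.ne_iff.1 hd
  have hTv : T * ExteriorAlgebra.ι K v = 0 :=
    mul_eq_zero_of_finrank_lt (n := 1) (Nat.lt_succ_self _) hT (by simp)
  have hLeibniz := contractLeft_mul d T (ExteriorAlgebra.ι K v)
  rw [hTv, h, map_zero, zero_mul, zero_add] at hLeibniz
  rw [ExteriorAlgebra.ι, contractLeft_ι, ← Algebra.commutes, ← Algebra.smul_def, eq_comm,
    smul_eq_zero_iff_right hv] at hLeibniz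
  rw [← involute_involute T, hLeibniz, map_zero]

theorem contract_ιMulti_mul_self {k n : ℕ} (hn : n ≠ 0) (hV : finrank K V = n + k)
    {X : ExteriorAlgebra K V} (hX : X ∈ ⋀[K]^(n + k) V) (v : Fin k → Dual K V) :
    contract (ExteriorAlgebra.ιMulti K k v) X * contract (ExteriorAlgebra.ιMulti K k v) X = 0 := by
  refine contract_ιMulti_mul_eq_zero (fun i => contractLeft_contract_ιMulti v i X)
    (mul_eq_zero_of_finrank_lt (n := n) (by omega) hX ?_)
  exact contract_mem_exteriorPower (ExteriorAlgebra.ιMulti_range K k ⟨v, rfl⟩) hX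

end TopDegree

section CubicForm

open CliffordAlgebra

variable {R M : Type*} [CommRing R] [AddCommGroup M] [Module R M]

theorem contractLeft_sq_mul {d : Dual R M} {Z : ExteriorAlgebra R M}
    (hω : involute (contractLeft d Z) = contractLeft d Z) :
    contractLeft d (contractLeft d Z * contractLeft d Z * Z) = contractLeft d Z ^ 3 := by
  simp only [contractLeft_mul, contractLeft_contractLeft, map_mul, hω, zero_mul, mul_zero,
    add_zero, zero_add, pow_succ, pow_zero, one_mul]

theorem contractLeft_mul_mul_of_sq_eq_zero [Invertible (2 : R)] {d d' : Dual R M}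
    {Z : ExteriorAlgebra R M} (hω : involute (contractLeft d Z) = contractLeft d Z)
    (hω' : involute (contractLeft d' Z) = contractLeft d' Z) (hsq : contractLeft d Z ^ 2 = 0) :
    contractLeft d (contractLeft d Z * contractLeft d' Z * Z) = 0 := by
  set ω := contractLeft d Z
  set ω' := contractLeft d' Z
  have hcomm : Commute ω ω' := commute_of_involute_eq_self hω ω'
  have hmixed : ω * contractLeft d' ω = 0 := by
    have h := congrArg (contractLeft d') hsq
    rw [pow_two, contractLeft_mul, hω, map_zero,
      ← (commute_of_involute_eq_self hω (contractLeft d' ω)).eq, ← two_smul R] at h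
    simpa using congrArg ((⅟2 : R) • ·) h
  have hdω : contractLeft d ω = 0 := contractLeft_contractLeft d Z
  have hdω' : contractLeft d ω' = -contractLeft d' ω := contractLeft_comm d d' Z
  calc contractLeft d (ω * ω' * Z)
      = -(ω * contractLeft d' ω * Z) + ω' * ω ^ 2 := by
        rw [contractLeft_mul, contractLeft_mul, map_mul, hω, hω', hdω, hdω', zero_mul, zero_add,
          mul_neg, neg_mul, hcomm.eq, mul_assoc ω', ← pow_two]
    _ = 0 := by rw [hmixed, hsq, zero_mul, mul_zero, neg_zero, zero_add]

end CubicForm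

section Nilpotency

variable {A : Type*} [Ring A]

theorem sum_pow_succ_eq_zero_of_sq_eq_zero {l : ℕ} {x : Fin l → A}
    (hcomm : ∀ i j, Commute (x i) (x j)) (hsq : ∀ i, x i ^ 2 = 0) : (∑ i, x i) ^ (l + 1) = 0 := by
  induction l with
  | zero => simp
  | succ l ih =>
    rw [Fin.sum_univ_succ]
    exact (Commute.sum_right _ _ _ fun i _ => hcomm 0 i.succ)
      |>.add_pow_eq_zero_of_add_le_succ_of_pow_eq_zero (hsq 0)
        (ih (fun i j => hcomm i.succ j.succ) fun i => hsq i.succ) (by omega)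

end Nilpotency

section Length

open CliffordAlgebra

variable {K V : Type*} [Field K] [AddCommGroup V] [Module K V]

theorem memPow_top_iff {n : ℕ} {a : ExteriorAlgebra K V} :
    memPow (⊤ : Submodule K V) n a ↔ a ∈ ⋀[K]^n V := by
  rw [memPow, Submodule.map_top]

theorem len_eq_iff_hasLen {A : Submodule K V} {k l : ℕ} {a : ExteriorAlgebra K V} (hl : l ≠ 0) :
    len A k a = l ↔ HasLen A k l a := by
  constructor
  · rintro rfl
    exact ⟨Nat.sInf_mem (Nat.nonempty_of_pos_sInf (Nat.pos_of_ne_zero hl)),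
      fun j hj => Nat.notMem_of_lt_sInf hj⟩
  · rintro ⟨hle, hlt⟩
    exact IsLeast.csInf_eq ⟨hle, fun j hj => not_lt.1 fun h => hlt j h hj⟩

theorem LenLE.mul_ι {A : Submodule K V} {k l : ℕ} {a : ExteriorAlgebra K V} (ha : LenLE A k l a)
    (v : V) : LenLE (⊤ : Submodule K V) (k + 1) l (a * ExteriorAlgebra.ι K v) := by
  obtain ⟨Y, hY, rfl⟩ := ha
  refine ⟨fun i => Y i * ExteriorAlgebra.ι K v, fun i => ?_, Finset.sum_mul _ _ _⟩
  obtain ⟨w, -, hw⟩ := hY i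
  refine ⟨Fin.snoc w v, fun _ => Submodule.mem_top, ?_⟩
  change Y i * ExteriorAlgebra.ι K v = _
  simp only [hw, List.ofFn_succ_last, Fin.snoc_castSucc, Fin.snoc_last, List.prod_append,
    List.prod_singleton]

theorem LenLE.contract_pow_succ_eq_zero [FiniteDimensional K V] {k l n : ℕ} (hn : n ≠ 0)
    (hn' : Even n) (hV : finrank K V = n + k) {Φ : ExteriorAlgebra K (Dual K V)}
    (hΦ : LenLE (⊤ : Submodule K (Dual K V)) k l Φ) {X : ExteriorAlgebra K V}
    (hX : X ∈ ⋀[K]^(n + k) V) : contract Φ X ^ (l + 1) = 0 := by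
  obtain ⟨Y, hY, rfl⟩ := hΦ
  choose v _ hv using hY
  simp only [← ExteriorAlgebra.ιMulti_apply] at hv
  have heven (i) : involute (contract (Y i) X) = contract (Y i) X := by
    have hmem : contract (Y i) X ∈ ⋀[K]^n V :=
      contract_mem_exteriorPower (hv i ▸ ExteriorAlgebra.ιMulti_range K k ⟨v i, rfl⟩) hX
    rw [involute_eq_smul_of_mem_exteriorPower hmem, hn'.neg_one_pow, one_smul]
  rw [map_sum, LinearMap.sum_apply]
  refine sum_pow_succ_eq_zero_of_sq_eq_zero
    (fun i j => commute_of_involute_eq_self (heven i) _) fun i => ?_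
  rw [pow_two, hv i]
  exact contract_ιMulti_mul_self hn hV hX (v i)

theorem LenLE.contractLeft_contract_pow_succ_eq_zero [FiniteDimensional K V] {k l n : ℕ}
    (hn : n ≠ 0) (hn' : Even n) (hV : finrank K V = n + (k + 1)) {A : Submodule K (Dual K V)}
    {Ω : ExteriorAlgebra K (Dual K V)} (hΩ : LenLE A k l Ω) (P : ExteriorAlgebra K (Dual K V))
    (d : Dual K V) {X : ExteriorAlgebra K V} (hX : X ∈ ⋀[K]^(n + (k + 1)) V) :
    contractLeft d (contract (Ω + P * ExteriorAlgebra.ι K d) X) ^ (l + 1) = 0 := by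
  have hΩd := (hΩ.mul_ι d).contract_pow_succ_eq_zero hn hn' hV hX
  rwa [← add_zero (Ω * _), ← mul_zero P, ← ExteriorAlgebra.ι_sq_zero d, ← mul_assoc, ← add_mul,
    contract_mul, contract_ι] at hΩd

end Length

section UnitVectors

theorem exists_eq_smul_unit {ι : Type*} [Fintype ι] [Nonempty ι] (u : ι → ℝ) :
    ∃ (r : ℝ) (q : ι → ℝ), ∑ i, q i ^ 2 = 1 ∧ u = r • q := by
  classical
  obtain h | h := (Finset.sum_nonneg fun i _ => sq_nonneg (u i) : 0 ≤ ∑ i, u i ^ 2).eq_or_lt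
  · refine ⟨0, Pi.single (Classical.arbitrary ι) 1, by simp [Pi.single_apply], ?_⟩
    ext i
    simpa using (Finset.sum_eq_zero_iff_of_nonneg fun i _ => sq_nonneg (u i)).1 h.symm i
  · have hr : √(∑ i, u i ^ 2) ≠ 0 := (Real.sqrt_pos.2 h).ne'
    refine ⟨√(∑ i, u i ^ 2), (√(∑ i, u i ^ 2))⁻¹ • u, ?_, (smul_inv_smul₀ hr u).symm⟩
    simp only [Pi.smul_apply, smul_eq_mul, mul_pow, ← Finset.mul_sum, inv_pow,
      Real.sq_sqrt h.le, inv_mul_cancel₀ h.ne']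

end UnitVectors

section Hyperkahler

open ExteriorAlgebra (ι ιMulti)

variable {R M : Type*} [CommRing R] [AddCommGroup M] [Module R M]

theorem ι_mul_ι_swap (x y : M) : ι R x * ι R y = -(ι R y * ι R x) :=
  eq_neg_of_add_eq_zero_left (ExteriorAlgebra.ι_add_mul_swap x y)

theorem ι_mul_ι_mul_self (x : M) (a : ExteriorAlgebra R M) : ι R x * (ι R x * a) = 0 := by
  rw [← mul_assoc, ExteriorAlgebra.ι_sq_zero, zero_mul]

theorem ι_mul_ι_mul_swap (x y : M) (a : ExteriorAlgebra R M) :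
    ι R x * (ι R y * a) = -(ι R y * (ι R x * a)) := by
  rw [← mul_assoc, ι_mul_ι_swap, neg_mul, mul_assoc]

theorem ι_mul_ι_rotate {c s : R} (h : c ^ 2 + s ^ 2 = 1) (x y : M) :
    ι R (c • x + s • y) * ι R (-s • x + c • y) = ι R x * ι R y := by
  simp only [map_add, map_smul, mul_add, add_mul, smul_mul_assoc, mul_smul_comm,
    ExteriorAlgebra.ι_sq_zero, ι_mul_ι_swap y x]
  match_scalars
  linear_combination h

variable (R) in
/-- The hyperkähler triple of `2`-vectors of a frame of a four-dimensional space, ordered and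
signed as its members occur in `PsiMinus`. -/
noncomputable def hyperkahler (x : Fin 4 → M) : Fin 3 → ExteriorAlgebra R M :=
  ![ι R (x 0) * ι R (x 1) + ι R (x 2) * ι R (x 3), ι R (x 0) * ι R (x 3) + ι R (x 1) * ι R (x 2),
    ι R (x 0) * ι R (x 2) - ι R (x 1) * ι R (x 3)]

theorem ιMulti_seven (y : Fin 7 → M) : ιMulti R 7 y = ι R (y 0) * ι R (y 1) * ι R (y 2) *
    ι R (y 3) * ι R (y 4) * ι R (y 5) * ι R (y 6) := by
  rw [ExteriorAlgebra.ιMulti_apply, List.ofFn_eq_map]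
  simp [List.finRange, mul_assoc]

theorem hyperkahler_zero_sq (x : Fin 4 → M) :
    hyperkahler R x 0 ^ 2 = (2 : R) • (ι R (x 0) * ι R (x 1) * ι R (x 2) * ι R (x 3)) := by
  have heven (y z : M) :
      CliffordAlgebra.involute (ι R y * ι R z) = ι R y * ι R z := by
    simp [ExteriorAlgebra.ι]
  have hsq (y z : M) : (ι R y * ι R z) ^ 2 = 0 := by
    rw [pow_two, mul_assoc, ι_mul_ι_mul_swap z y, mul_neg, ι_mul_ι_mul_self, neg_zero]
  have hcomm := commute_of_involute_eq_self (heven (x 0) (x 1)) (ι R (x 2) * ι R (x 3))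
  rw [hyperkahler, Matrix.cons_val_zero, hcomm.add_sq, hsq, hsq, zero_add, add_zero, two_smul,
    two_mul, add_mul]
  simp only [mul_assoc]

theorem hyperkahler_mul_quaternion {q : Fin 4 → R} (hq : ∑ i, q i ^ 2 = 1) (x : Fin 4 → M) :
    hyperkahler R ![q 0 • x 0 + q 1 • x 1 + q 2 • x 2 + q 3 • x 3,
      -q 1 • x 0 + q 0 • x 1 - q 3 • x 2 + q 2 • x 3,
      -q 2 • x 0 + q 3 • x 1 + q 0 • x 2 - q 1 • x 3,
      -q 3 • x 0 - q 2 • x 1 + q 1 • x 2 + q 0 • x 3] = hyperkahler R x := by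
  have hswap (i j) (_ : i < j) : ι R (x j) * ι R (x i) = -(ι R (x i) * ι R (x j)) :=
    ι_mul_ι_swap _ _
  simp only [Fin.sum_univ_four] at hq
  ext i
  fin_cases i <;> simp only [hyperkahler, Fin.zero_eta, Fin.mk_one, Fin.reduceFinMk, Fin.isValue,
    Matrix.cons_val, Matrix.cons_val_zero, Matrix.cons_val_one, map_add, map_sub, map_smul,
    mul_add, mul_sub, add_mul, sub_mul, Algebra.mul_smul_comm, Algebra.smul_mul_assoc,
    ExteriorAlgebra.ι_sq_zero, hswap, Fin.reduceLT, zero_lt_one] <;> match_scalars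
  all_goals first | ring1 | linear_combination hq | linear_combination -hq

theorem hyperkahler_rotate_two_three {c s : R} (h : c ^ 2 + s ^ 2 = 1) (x : Fin 4 → M) :
    hyperkahler R ![x 0, x 1, c • x 2 + s • x 3, -s • x 2 + c • x 3] =
      ![hyperkahler R x 0, c • hyperkahler R x 1 - s • hyperkahler R x 2,
        s • hyperkahler R x 1 + c • hyperkahler R x 2] := by
  ext i
  fin_cases i <;> simp only [hyperkahler, Fin.zero_eta, Fin.mk_one, Fin.reduceFinMk, Fin.isValue,
    Matrix.cons_val, Matrix.cons_val_zero, Matrix.cons_val_one, map_add, map_smul,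
    mul_add, add_mul, Algebra.mul_smul_comm, Algebra.smul_mul_assoc, ExteriorAlgebra.ι_sq_zero,
    ι_mul_ι_swap (x 3) (x 2)] <;> match_scalars
  all_goals first | ring1 | linear_combination h

theorem hyperkahler_rotate_one_two {c s : R} (h : c ^ 2 + s ^ 2 = 1) (x : Fin 4 → M) :
    hyperkahler R ![x 0, c • x 1 + s • x 2, -s • x 1 + c • x 2, x 3] =
      ![c • hyperkahler R x 0 + s • hyperkahler R x 2, hyperkahler R x 1,
        -s • hyperkahler R x 0 + c • hyperkahler R x 2] := by
  ext i
  fin_cases i <;> simp only [hyperkahler, Fin.zero_eta, Fin.mk_one, Fin.reduceFinMk, Fin.isValue,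
    Matrix.cons_val, Matrix.cons_val_zero, Matrix.cons_val_one, map_add, map_smul,
    mul_add, add_mul, Algebra.mul_smul_comm, Algebra.smul_mul_assoc, ExteriorAlgebra.ι_sq_zero,
    ι_mul_ι_swap (x 2) (x 1)] <;> match_scalars
  all_goals first | ring1 | linear_combination h

end Hyperkahler

section Frames

open ExteriorAlgebra (ι ιMulti)

variable {V : Type*} [AddCommGroup V] [Module ℝ V]

theorem PsiMinus_eq_hyperkahler (f : Fin 7 → Dual ℝ V) :
    PsiMinus f = wedge4 f 0 1 2 3 -
      hyperkahler ℝ ![f 0, f 1, f 2, f 3] 0 * (ι ℝ (f 4) * ι ℝ (f 5)) +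
      hyperkahler ℝ ![f 0, f 1, f 2, f 3] 1 * (ι ℝ (f 4) * ι ℝ (f 6)) +
      hyperkahler ℝ ![f 0, f 1, f 2, f 3] 2 * (ι ℝ (f 5) * ι ℝ (f 6)) := by
  simp only [PsiMinus, wedge4, hyperkahler, Matrix.cons_val]
  noncomm_ring

theorem ιMulti_eq_wedge4_mul (f : Fin 7 → Dual ℝ V) :
    ιMulti ℝ 7 f = wedge4 f 0 1 2 3 * (ι ℝ (f 4) * ι ℝ (f 5) * ι ℝ (f 6)) := by
  simp only [ιMulti_seven, wedge4, mul_assoc]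

/-- Two coframes define the same form `Ψ` and the same volume form. -/
def SameForms (f f' : Fin 7 → Dual ℝ V) : Prop :=
  PsiMinus f' = PsiMinus f ∧ ιMulti ℝ 7 f' = ιMulti ℝ 7 f

theorem SameForms.trans {f f' f'' : Fin 7 → Dual ℝ V} (h : SameForms f f') (h' : SameForms f' f'') :
    SameForms f f'' :=
  ⟨h'.1.trans h.1, h'.2.trans h.2⟩

theorem SameForms.of_hyperkahler_eq {f : Fin 7 → Dual ℝ V} {x : Fin 4 → Dual ℝ V}
    (h : hyperkahler ℝ x = hyperkahler ℝ ![f 0, f 1, f 2, f 3]) :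
    SameForms f ![x 0, x 1, x 2, x 3, f 4, f 5, f 6] := by
  have hvol := congrArg (fun κ => κ 0 ^ 2) h
  simp only [hyperkahler_zero_sq, Matrix.cons_val] at hvol
  replace hvol := smul_right_injective _ (two_ne_zero' ℝ) hvol
  have hx : ![x 0, x 1, x 2, x 3] = x := List.ofFn_injective rfl
  constructor
  · simp only [PsiMinus_eq_hyperkahler, wedge4, Matrix.cons_val, hx, h, hvol]
  · simp only [ιMulti_eq_wedge4_mul, wedge4, Matrix.cons_val, hvol]

theorem exists_sameForms_quaternion (f : Fin 7 → Dual ℝ V) (u : Fin 4 → ℝ) :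
    ∃ (f' : Fin 7 → Dual ℝ V) (r : ℝ), SameForms f f' ∧
      u 0 • f 0 + u 1 • f 1 + u 2 • f 2 + u 3 • f 3 = r • f' 0 ∧
      f' 4 = f 4 ∧ f' 5 = f 5 ∧ f' 6 = f 6 := by
  obtain ⟨r, q, hq, rfl⟩ := exists_eq_smul_unit u
  refine ⟨_, r, .of_hyperkahler_eq (hyperkahler_mul_quaternion hq _), ?_, rfl, rfl, rfl⟩
  simp only [Pi.smul_apply, smul_eq_mul, mul_smul, ← smul_add]
  rfl

theorem exists_sameForms_rotate_four_five (f : Fin 7 → Dual ℝ V) (u v : ℝ) :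
    ∃ (f' : Fin 7 → Dual ℝ V) (r : ℝ), SameForms f f' ∧
      u • f 4 + v • f 5 = r • f' 4 ∧ f' 0 = f 0 ∧ f' 6 = f 6 := by
  obtain ⟨r, q, hq, hu⟩ := exists_eq_smul_unit ![u, -v]
  obtain ⟨rfl, hv⟩ : u = r * q 0 ∧ -v = r * q 1 := ⟨congrFun hu 0, congrFun hu 1⟩
  obtain rfl : v = r * -q 1 := by linarith
  rw [Fin.sum_univ_two] at hq
  have hκ := hyperkahler_rotate_two_three hq ![f 0, f 1, f 2, f 3]
  have hy := ι_mul_ι_rotate (show q 0 ^ 2 + (-q 1) ^ 2 = 1 by rwa [neg_sq]) (f 4) (f 5)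
  have hvol : ι ℝ (f 0) * ι ℝ (f 1) * ι ℝ (q 0 • f 2 + q 1 • f 3) *
      ι ℝ (-q 1 • f 2 + q 0 • f 3) = ι ℝ (f 0) * ι ℝ (f 1) * ι ℝ (f 2) * ι ℝ (f 3) := by
    rw [mul_assoc, ι_mul_ι_rotate hq, ← mul_assoc]
  refine ⟨![f 0, f 1, q 0 • f 2 + q 1 • f 3, -q 1 • f 2 + q 0 • f 3, q 0 • f 4 + -q 1 • f 5,
    -(-q 1) • f 4 + q 0 • f 5, f 6], r, ⟨?_, ?_⟩, by rw [mul_smul, mul_smul, ← smul_add]; rfl, rfl,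
    rfl⟩
  · simp only [PsiMinus_eq_hyperkahler, wedge4, Matrix.cons_val] at hκ ⊢
    rw [hκ, hvol, hy]
    simp only [Matrix.cons_val, map_add, map_smul, add_mul, mul_add, sub_mul, smul_mul_assoc,
      mul_smul_comm]
    match_scalars
    all_goals first | ring1 | linear_combination hq
  · simp only [ιMulti_eq_wedge4_mul, wedge4, Matrix.cons_val, hvol, hy]

theorem exists_sameForms_rotate_four_six (f : Fin 7 → Dual ℝ V) (u v : ℝ) :
    ∃ (f' : Fin 7 → Dual ℝ V) (r : ℝ), SameForms f f' ∧
      u • f 4 + v • f 6 = r • f' 4 ∧ f' 0 = f 0 := by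
  obtain ⟨r, q, hq, hu⟩ := exists_eq_smul_unit ![u, v]
  obtain ⟨rfl, rfl⟩ : u = r * q 0 ∧ v = r * q 1 := ⟨congrFun hu 0, congrFun hu 1⟩
  rw [Fin.sum_univ_two] at hq
  have hκ := hyperkahler_rotate_one_two hq ![f 0, f 1, f 2, f 3]
  have hy := ι_mul_ι_rotate hq (f 4) (f 6)
  have hvol : ι ℝ (f 0) * ι ℝ (q 0 • f 1 + q 1 • f 2) * ι ℝ (-q 1 • f 1 + q 0 • f 2) *
      ι ℝ (f 3) = ι ℝ (f 0) * ι ℝ (f 1) * ι ℝ (f 2) * ι ℝ (f 3) := by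
    rw [mul_assoc (ι ℝ (f 0)), ι_mul_ι_rotate hq, ← mul_assoc (ι ℝ (f 0))]
  refine ⟨![f 0, q 0 • f 1 + q 1 • f 2, -q 1 • f 1 + q 0 • f 2, f 3, q 0 • f 4 + q 1 • f 6,
    f 5, -q 1 • f 4 + q 0 • f 6], r, ⟨?_, ?_⟩, by rw [mul_smul, mul_smul, ← smul_add]; rfl, rfl⟩
  · simp only [PsiMinus_eq_hyperkahler, wedge4, Matrix.cons_val] at hκ ⊢
    rw [hκ, hvol, hy]
    simp only [Matrix.cons_val, map_add, map_smul, add_mul, mul_add, smul_mul_assoc,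
      mul_smul_comm, ι_mul_ι_swap (f 5) (f 4), ι_mul_ι_swap (f 6) (f 5), mul_neg]
    match_scalars
    all_goals first | ring1 | linear_combination hq | linear_combination -hq
  · have hswap (y : Dual ℝ V) (z : Dual ℝ V) :
        ι ℝ y * ι ℝ (f 5) * ι ℝ z = -(ι ℝ y * ι ℝ z * ι ℝ (f 5)) := by
      rw [mul_assoc, ι_mul_ι_swap (f 5), mul_neg, mul_assoc]
    simp only [ιMulti_eq_wedge4_mul, wedge4, Matrix.cons_val, hvol, hswap, hy]

theorem exists_sameForms_eq_add (f : Fin 7 → Dual ℝ V) (u : Fin 7 → ℝ) :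
    ∃ (f' : Fin 7 → Dual ℝ V) (r s : ℝ), SameForms f f' ∧
      ∑ i, u i • f i = r • f' 0 + s • f' 4 := by
  obtain ⟨f₁, r, h₁, hr, h4, h5, h6⟩ := exists_sameForms_quaternion f ![u 0, u 1, u 2, u 3]
  obtain ⟨f₂, s, h₂, hs, h0, h6'⟩ := exists_sameForms_rotate_four_five f₁ (u 4) (u 5)
  obtain ⟨f₃, t, h₃, ht, h0'⟩ := exists_sameForms_rotate_four_six f₂ s (u 6)
  refine ⟨f₃, r, t, (h₁.trans h₂).trans h₃, ?_⟩
  rw [h4, h5] at hs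
  rw [h6', h6, ← hs] at ht
  rw [h0', h0, ← ht]
  simp only [Matrix.cons_val] at hr
  rw [← hr, Fin.sum_univ_seven]
  abel

end Frames

section Metric

open ExteriorAlgebra (ι ιMulti)

section Frame

variable {R M : Type*} [CommRing R] [AddCommGroup M] [Module R M]

variable (R) in
/-- The trivector `Ψ ⌟ e₁…₇`, written in the basis `y = (e₁, …, e₇)`. -/
noncomputable def psiTrivector (y : Fin 7 → M) : ExteriorAlgebra R M :=
  ι R (y 4) * ι R (y 5) * ι R (y 6) - hyperkahler R ![y 0, y 1, y 2, y 3] 0 * ι R (y 6) -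
    hyperkahler R ![y 0, y 1, y 2, y 3] 1 * ι R (y 5) +
    hyperkahler R ![y 0, y 1, y 2, y 3] 2 * ι R (y 4)

theorem psiTrivector_cubic (y : Fin 7 → M) (r s p q : R) :
    (r • (ι R (y 2) * ι R (y 4) - ι R (y 1) * ι R (y 6) - ι R (y 3) * ι R (y 5)) +
          s • (ι R (y 5) * ι R (y 6) + ι R (y 0) * ι R (y 2) - ι R (y 1) * ι R (y 3))) *
        (p • (ι R (y 2) * ι R (y 4) - ι R (y 1) * ι R (y 6) - ι R (y 3) * ι R (y 5)) +
          q • (ι R (y 5) * ι R (y 6) + ι R (y 0) * ι R (y 2) - ι R (y 1) * ι R (y 3))) *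
      psiTrivector R y = (6 * (s * q - r * p)) • ιMulti R 7 y := by
  have hswap (i j) (_ : i < j) : ι R (y j) * ι R (y i) = -(ι R (y i) * ι R (y j)) :=
    ι_mul_ι_swap _ _
  have hswap' (i j) (_ : i < j) (a) :
      ι R (y j) * (ι R (y i) * a) = -(ι R (y i) * (ι R (y j) * a)) := ι_mul_ι_mul_swap _ _ _
  rw [ιMulti_seven]
  simp only [psiTrivector, hyperkahler, Fin.isValue, Matrix.cons_val, Matrix.cons_val_zero,
    Matrix.cons_val_one, mul_add, add_mul, mul_sub, sub_mul, mul_neg, neg_mul, mul_assoc,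
    Algebra.mul_smul_comm, Algebra.smul_mul_assoc, zero_mul, mul_zero, neg_zero,
    ExteriorAlgebra.ι_sq_zero, ι_mul_ι_mul_self, hswap, hswap', Fin.reduceLT, zero_lt_one]
  match_scalars
  all_goals ring

end Frame

section Coframe

open CliffordAlgebra (contractLeft)

variable {R M I : Type*} [CommRing R] [AddCommGroup M] [Module R M] [DecidableEq I]

theorem contractLeft_coord_ι_mul (b : Basis I R M) (i j : I) (a : ExteriorAlgebra R M) :
    contractLeft (b.coord i) (ι R (b j) * a) =
      (if j = i then a else 0) - ι R (b j) * contractLeft (b.coord i) a := by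
  rw [ι, CliffordAlgebra.contractLeft_ι_mul, b.coord_apply, b.repr_self_apply, ite_smul,
    one_smul, zero_smul]

variable {V : Type*} [AddCommGroup V] [Module ℝ V]

theorem Zctr_eq_contract (f : Fin 7 → Dual ℝ V) (X : ExteriorAlgebra ℝ V) :
    Zctr f X = contract (PsiMinus f) X := by
  simp only [PsiMinus, wedge4, map_add, map_sub, LinearMap.add_apply, LinearMap.sub_apply,
    contract_mul, contract_ι, Zctr, ctr4, ctr1]

theorem contract_PsiMinus_ιMulti (b : Basis (Fin 7) ℝ V) :
    contract (PsiMinus b.coord) (ιMulti ℝ 7 b) = psiTrivector ℝ b := by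
  rw [← Zctr_eq_contract, ιMulti_seven]
  simp [Zctr, ctr4, ctr1, contractLeft_coord_ι_mul, psiTrivector, hyperkahler, mul_assoc,
    add_mul, sub_mul]
  abel

theorem contractLeft_coord_zero_psiTrivector (b : Basis (Fin 7) ℝ V) :
    contractLeft (b.coord 0) (psiTrivector ℝ b) =
      ι ℝ (b 2) * ι ℝ (b 4) - ι ℝ (b 1) * ι ℝ (b 6) - ι ℝ (b 3) * ι ℝ (b 5) := by
  simp [contractLeft_coord_ι_mul, psiTrivector, hyperkahler, mul_assoc, add_mul, sub_mul]
  abel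

theorem contractLeft_coord_four_psiTrivector (b : Basis (Fin 7) ℝ V) :
    contractLeft (b.coord 4) (psiTrivector ℝ b) =
      ι ℝ (b 5) * ι ℝ (b 6) + ι ℝ (b 0) * ι ℝ (b 2) - ι ℝ (b 1) * ι ℝ (b 3) := by
  simp [contractLeft_coord_ι_mul, psiTrivector, hyperkahler, mul_assoc, add_mul, sub_mul]
  abel

theorem contractLeft_contract_PsiMinus_cubic [FiniteDimensional ℝ V] (b : Basis (Fin 7) ℝ V)
    {X : ExteriorAlgebra ℝ V} (hX : X ∈ ⋀[ℝ]^7 V) (hX0 : X ≠ 0) :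
    ∃ c : ℝ, c ≠ 0 ∧ ∀ r s p q : ℝ,
      contractLeft (r • b.coord 0 + s • b.coord 4) (contract (PsiMinus b.dualBasis) X) *
          contractLeft (p • b.coord 0 + q • b.coord 4) (contract (PsiMinus b.dualBasis) X) *
        contract (PsiMinus b.dualBasis) X = (c * (s * q - r * p)) • X := by
  obtain ⟨t, rfl⟩ := exists_eq_smul_ιMulti_basis b hX
  have ht : t ≠ 0 := fun h => hX0 (by rw [h, zero_smul])
  refine ⟨6 * t ^ 2, by positivity, fun r s p q => ?_⟩
  rw [b.coe_dualBasis, map_smul, contract_PsiMinus_ιMulti]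
  simp only [map_smul, map_add, LinearMap.add_apply, LinearMap.smul_apply,
    contractLeft_coord_zero_psiTrivector, contractLeft_coord_four_psiTrivector, smul_mul_assoc,
    mul_smul_comm, psiTrivector_cubic]
  module

end Coframe

end Metric

section Projection

open ExteriorAlgebra (ι)

variable {K V : Type*} [Field K] [AddCommGroup V] [Module K V]

theorem map_eq_self_of_memPow {U : Submodule K V} {p : V →ₗ[K] V} (hp : ∀ u ∈ U, p u = u) {n : ℕ}
    {a : ExteriorAlgebra K V} (ha : memPow U n a) : ExteriorAlgebra.map p a = a := by
  induction n generalizing a with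
  | zero =>
    rw [memPow, pow_zero] at ha
    obtain ⟨r, rfl⟩ := Submodule.mem_one.1 ha
    exact AlgHom.commutes _ r
  | succ n ih =>
    rw [memPow, pow_succ'] at ha
    refine Submodule.mul_induction_on ha ?_ fun x y hx hy => by rw [map_add, hx, hy]
    rintro _ ⟨u, hu, rfl⟩ y hy
    rw [map_mul, ExteriorAlgebra.map_apply_ι, hp u hu, ih hy]

theorem exists_map_add_mul_ι_eq {v : V} {U : Submodule K V} (hU : IsCompl (Submodule.span K {v}) U)
    {n : ℕ} {Ω : ExteriorAlgebra K V} (hΩ : memPow U n Ω) (P : ExteriorAlgebra K V) :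
    ∃ p : V →ₗ[K] V, (∀ w, p w ∈ U) ∧ p v = 0 ∧ ExteriorAlgebra.map p (Ω + P * ι K v) = Ω := by
  let p : V →ₗ[K] V := U.subtype ∘ₗ U.projectionOnto _ hU.symm
  have hpU (u) (hu : u ∈ U) : p u = u :=
    congrArg Subtype.val (Submodule.projectionOnto_apply_left hU.symm ⟨u, hu⟩)
  have hpv : p v = 0 := by simp [p, Submodule.mem_span_singleton_self]
  refine ⟨p, fun w => Subtype.property _, hpv, ?_⟩
  rw [map_add, map_mul, ExteriorAlgebra.map_apply_ι, hpv, map_zero, mul_zero, add_zero,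
    map_eq_self_of_memPow hpU hΩ]

end Projection

section NullCovectors

open ExteriorAlgebra (ι)

variable {V W : Type*} [AddCommGroup V] [Module ℝ V] [AddCommGroup W] [Module ℝ W]

theorem map_PsiMinus (p : Dual ℝ V →ₗ[ℝ] Dual ℝ W) (f : Fin 7 → Dual ℝ V) :
    ExteriorAlgebra.map p (PsiMinus f) = PsiMinus (p ∘ f) := by
  simp only [PsiMinus, wedge4, map_add, map_sub, map_mul, ExteriorAlgebra.map_apply_ι,
    Function.comp_apply]

theorem PsiMinus_eq_add_of_eq_smul {f : Fin 7 → Dual ℝ V} {ε : ℝ} (hε : ε ^ 2 = 1)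
    (hf : f 4 = ε • f 0) :
    PsiMinus f =
      ι ℝ (f 0) * ι ℝ (f 2) * ι ℝ (f 1 - ε • f 5) * ι ℝ (-f 3 - ε • f 6) +
        ι ℝ (-f 1) * ι ℝ (f 3) * ι ℝ (f 5) * ι ℝ (f 6) := by
  have hswap (i j) (_ : i < j) : ι ℝ (f j) * ι ℝ (f i) = -(ι ℝ (f i) * ι ℝ (f j)) :=
    ι_mul_ι_swap _ _
  have hswap' (i j) (_ : i < j) (a) :
      ι ℝ (f j) * (ι ℝ (f i) * a) = -(ι ℝ (f i) * (ι ℝ (f j) * a)) := ι_mul_ι_mul_swap _ _ _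
  simp only [PsiMinus, wedge4, hf, Fin.isValue, map_sub, map_neg, map_smul, mul_sub, sub_mul,
    mul_neg, neg_mul, mul_assoc, Algebra.mul_smul_comm, Algebra.smul_mul_assoc, zero_mul,
    neg_zero, smul_zero, ι_mul_ι_mul_self, hswap, hswap', Fin.reduceLT, zero_lt_one]
  match_scalars
  all_goals first | ring1 | linear_combination hε | linear_combination -hε

theorem LenLE.PsiMinus_of_eq_smul {A : Submodule ℝ (Dual ℝ V)} {f : Fin 7 → Dual ℝ V}
    (hA : ∀ i, f i ∈ A) {ε : ℝ} (hε : ε ^ 2 = 1) (hf : f 4 = ε • f 0) :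
    LenLE A 4 2 (PsiMinus f) := by
  refine ⟨![ι ℝ (f 0) * ι ℝ (f 2) * ι ℝ (f 1 - ε • f 5) * ι ℝ (-f 3 - ε • f 6),
    ι ℝ (-f 1) * ι ℝ (f 3) * ι ℝ (f 5) * ι ℝ (f 6)], Fin.forall_fin_two.2 ⟨?_, ?_⟩, ?_⟩
  · refine ⟨![f 0, f 2, f 1 - ε • f 5, -f 3 - ε • f 6], ?_, by simp [mul_assoc]⟩
    simpa [Fin.forall_fin_succ] using ⟨hA 0, hA 2, sub_mem (hA 1) (A.smul_mem ε (hA 5)),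
      sub_mem (neg_mem (hA 3)) (A.smul_mem ε (hA 6))⟩
  · refine ⟨![-f 1, f 3, f 5, f 6], ?_, by simp [mul_assoc]⟩
    simpa [Fin.forall_fin_succ] using ⟨hA 1, hA 3, hA 5, hA 6⟩
  · rw [Fin.sum_univ_two]
    exact PsiMinus_eq_add_of_eq_smul hε hf

theorem LenLE.PsiMinus_of_smul_add_smul_eq_zero {A : Submodule ℝ (Dual ℝ V)}
    {f : Fin 7 → Dual ℝ V} (hA : ∀ i, f i ∈ A) {r s : ℝ} (hr : r ≠ 0) (hrs : s ^ 2 = r ^ 2)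
    (hf : r • f 0 + s • f 4 = 0) : LenLE A 4 2 (PsiMinus f) := by
  have hs : s ≠ 0 := fun h => hr (by simpa [h] using hrs.symm)
  refine .PsiMinus_of_eq_smul hA (ε := -(r / s)) (by rw [neg_sq, div_pow, hrs]; field_simp) ?_
  rw [← inv_smul_smul₀ hs (f 4), eq_neg_of_add_eq_zero_right hf, div_eq_inv_mul]
  module

end NullCovectors

section TrivectorDimSeven

open CliffordAlgebra (contractLeft involute)

variable {K V : Type*} [Field K] [AddCommGroup V] [Module K V] {d : Dual K V}
  {Z : ExteriorAlgebra K V}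

theorem involute_contractLeft_of_mem_exteriorPower_three (hZ : Z ∈ ⋀[K]^3 V) (d : Dual K V) :
    involute (contractLeft d Z) = contractLeft d Z := by
  rw [involute_eq_smul_of_mem_exteriorPower (contractLeft_mem_exteriorPower d hZ), neg_one_sq,
    one_smul]

theorem mul_mul_mem_exteriorPower_seven (hZ : Z ∈ ⋀[K]^3 V) (d d' : Dual K V) :
    contractLeft d Z * contractLeft d' Z * Z ∈ ⋀[K]^7 V :=
  SetLike.mul_mem_graded (SetLike.mul_mem_graded (contractLeft_mem_exteriorPower d hZ)
    (contractLeft_mem_exteriorPower d' hZ)) hZ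

variable [FiniteDimensional K V]

theorem sq_mul_eq_zero_of_pow_three_eq_zero (hV : finrank K V = 7) (hd : d ≠ 0)
    (hZ : Z ∈ ⋀[K]^3 V) (h : contractLeft d Z ^ 3 = 0) :
    contractLeft d Z * contractLeft d Z * Z = 0 := by
  refine contractLeft_injOn_top hd (hV ▸ mul_mul_mem_exteriorPower_seven hZ d d) ?_
  rw [contractLeft_sq_mul (involute_contractLeft_of_mem_exteriorPower_three hZ d), h]

theorem mul_mul_eq_zero_of_sq_eq_zero [Invertible (2 : K)] (hV : finrank K V = 7) (hd : d ≠ 0)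
    (hZ : Z ∈ ⋀[K]^3 V) (h : contractLeft d Z ^ 2 = 0) (d' : Dual K V) :
    contractLeft d Z * contractLeft d' Z * Z = 0 :=
  contractLeft_injOn_top hd (hV ▸ mul_mul_mem_exteriorPower_seven hZ d d')
    (contractLeft_mul_mul_of_sq_eq_zero (involute_contractLeft_of_mem_exteriorPower_three hZ d)
      (involute_contractLeft_of_mem_exteriorPower_three hZ d') h)

end TrivectorDimSeven

section Psi

open CliffordAlgebra (contractLeft)

variable {V : Type*} [AddCommGroup V] [Module ℝ V] {X : ExteriorAlgebra ℝ V} {α : Dual ℝ V}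

theorem PsiMinus_mem_exteriorPower (f : Fin 7 → Dual ℝ V) :
    PsiMinus f ∈ ⋀[ℝ]^4 (Dual ℝ V) := by
  have hmem (i j k l) : wedge4 f i j k l ∈ ⋀[ℝ]^4 (Dual ℝ V) :=
    ExteriorAlgebra.ιMulti_range ℝ 4 ⟨![f i, f j, f k, f l], by simp [wedge4, mul_assoc]⟩
  refine add_mem (add_mem (add_mem (sub_mem (sub_mem (sub_mem ?_ ?_) ?_) ?_) ?_) ?_) ?_ <;>
    exact hmem _ _ _ _

theorem contract_PsiMinus_mem_exteriorPower (f : Fin 7 → Dual ℝ V) (hX : X ∈ ⋀[ℝ]^7 V) :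
    contract (PsiMinus f) X ∈ ⋀[ℝ]^3 V :=
  contract_mem_exteriorPower (PsiMinus_mem_exteriorPower f) hX

variable [FiniteDimensional ℝ V]

theorem exists_basis_PsiMinus_eq (b : Basis (Fin 7) ℝ V) (α : Dual ℝ V) :
    ∃ (b' : Basis (Fin 7) ℝ V) (r s : ℝ), PsiMinus b'.dualBasis = PsiMinus b.dualBasis ∧
      α = r • b'.coord 0 + s • b'.coord 4 := by
  obtain ⟨f, r, s, ⟨hΨ, hvol⟩, hα⟩ := exists_sameForms_eq_add b.dualBasis (b.dualBasis.repr α)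
  have hV : finrank ℝ V = 7 := by rw [finrank_eq_card_basis b, Fintype.card_fin]
  obtain ⟨b', rfl⟩ := exists_basis_dualBasis_eq hV (hvol ▸ ιMulti_basis_ne_zero b.dualBasis)
  refine ⟨b', r, s, hΨ, ?_⟩
  rw [← b.dualBasis.sum_repr α, hα, b'.coe_dualBasis]

theorem contractLeft_contract_PsiMinus_sq_ne_zero (b : Basis (Fin 7) ℝ V) (hα : α ≠ 0)
    (hX : X ∈ ⋀[ℝ]^7 V) (hX0 : X ≠ 0) :
    contractLeft α (contract (PsiMinus b.dualBasis) X) ^ 2 ≠ 0 := by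
  intro hsq
  have hZ := contract_PsiMinus_mem_exteriorPower b.dualBasis hX
  have hV : finrank ℝ V = 7 := by rw [finrank_eq_card_basis b, Fintype.card_fin]
  obtain ⟨b', r, s, hΨ, rfl⟩ := exists_basis_PsiMinus_eq b α
  rw [← hΨ] at hsq hZ
  obtain ⟨c, hc, hcubic⟩ := contractLeft_contract_PsiMinus_cubic b' hX hX0
  have hcubic0 (p q : ℝ) : s * q - r * p = 0 := by
    have h := mul_mul_eq_zero_of_sq_eq_zero hV hα hZ hsq (p • b'.coord 0 + q • b'.coord 4)
    rw [hcubic] at h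
    simpa [hc, hX0] using h
  obtain rfl : s = 0 := by simpa using hcubic0 0 1
  obtain rfl : r = 0 := by simpa using hcubic0 1 0
  simp at hα

theorem LenLE.two_of_contractLeft_cubic_eq_zero (b : Basis (Fin 7) ℝ V) (hα : α ≠ 0)
    (hX : X ∈ ⋀[ℝ]^7 V) (hX0 : X ≠ 0) {Z : ExteriorAlgebra ℝ V}
    (hZ : Z = contract (PsiMinus b.dualBasis) X)
    (hnull : contractLeft α Z * contractLeft α Z * Z = 0) {U : Submodule ℝ (Dual ℝ V)}
    (hU : IsCompl (Submodule.span ℝ {α}) U) {Ω P : ExteriorAlgebra ℝ (Dual ℝ V)}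
    (hΩ : memPow U 4 Ω)
    (hdec : PsiMinus b.dualBasis = Ω + P * ExteriorAlgebra.ι ℝ α) : LenLE U 4 2 Ω := by
  obtain ⟨p, hpU, hpα, hpΩ⟩ := exists_map_add_mul_ι_eq hU hΩ P
  obtain ⟨b', r, s, hΨ, rfl⟩ := exists_basis_PsiMinus_eq b α
  obtain ⟨c, hc, hcubic⟩ := contractLeft_contract_PsiMinus_cubic b' hX hX0
  rw [hZ, ← hΨ, hcubic] at hnull
  have hrs : s * s - r * r = 0 := by simpa [hc, hX0] using hnull
  have hr : r ≠ 0 := by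
    rintro rfl
    obtain rfl : s = 0 := by simpa using hrs
    simp at hα
  rw [← hpΩ, ← hdec, ← hΨ, map_PsiMinus]
  refine .PsiMinus_of_smul_add_smul_eq_zero (s := s) (fun i => hpU _) hr (by linarith) ?_
  simpa using hpα

end Psi

/-- Let `V` be a seven-dimensional real vector space with basis
`e₁,…,e₇` and dual basis `e¹,…,e⁷`, and let
`Ψ := e^{1234}-e^{1256}-e^{3456}-e^{2467}+e^{2357}+e^{1457}+e^{1367} ∈ Λ⁴V*` (the Hodge
dual of a `G₂*`-structure adapted to this basis).  Let `vol := e^{1234567}`, let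
`X ∈ Λ⁷V` be the seven-vector with `vol(X) = 1`, set `Z := Ψ ⌟ X ∈ Λ³V`, and define `g`
on `V*` by `6 g(β,γ) X = (β ⌟ Z) ∧ (γ ⌟ Z) ∧ Z`.  Then for every nonzero `α ∈ V*` and
every complement `U` of `span α` in `V*`, the unique forms `Ω ∈ Λ⁴U`, `ρ ∈ Λ³U` with
`Ψ = Ω + ρ ∧ α` satisfy: `l(Ω) = 2` iff `g(α,α) = 0`. -/
theorem stmt10 {V : Type*} [AddCommGroup V] [Module ℝ V] [FiniteDimensional ℝ V]
    (hV : finrank ℝ V = 7) (b : Basis (Fin 7) ℝ V)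
    (X : ExteriorAlgebra ℝ V) (hX7 : memPow (⊤ : Submodule ℝ V) 7 X)
    (hXvol :
      ctr1 (b.dualBasis 6) (ctr1 (b.dualBasis 5) (ctr1 (b.dualBasis 4)
        (ctr1 (b.dualBasis 3) (ctr1 (b.dualBasis 2) (ctr1 (b.dualBasis 1)
          (ctr1 (b.dualBasis 0) X)))))) = 1)
    (Z : ExteriorAlgebra ℝ V) (hZ : Z = Zctr (⇑b.dualBasis) X)
    (gm : Module.Dual ℝ V → Module.Dual ℝ V → ℝ)
    (hg : ∀ β γ : Module.Dual ℝ V,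
      ((6 : ℝ) * gm β γ) • X = ctr1 β Z * ctr1 γ Z * Z)
    (α : Module.Dual ℝ V) (hα : α ≠ 0)
    (U : Submodule ℝ (Module.Dual ℝ V)) (hU : IsCompl (Submodule.span ℝ {α}) U)
    (Ω P : ExteriorAlgebra ℝ (Module.Dual ℝ V))
    (hΩ : memPow U 4 Ω) (hP : memPow U 3 P)
    (hdec : PsiMinus (⇑b.dualBasis) = Ω + P * ExteriorAlgebra.ι ℝ α) :
    len U 4 Ω = 2 ↔ gm α α = 0 := by
  have hX0 : X ≠ 0 := by
    rintro rfl
    exact zero_ne_one (by simpa only [ctr1, map_zero] using hXvol)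
  rw [memPow_top_iff] at hX7
  have hgα : gm α α = 0 ↔ ctr1 α Z * ctr1 α Z * Z = 0 := by
    rw [← hg, smul_eq_zero_iff_left hX0, mul_eq_zero_iff_left (by norm_num)]
  rw [Zctr_eq_contract] at hZ
  have hpow {l : ℕ} (hl : LenLE U 4 l Ω) : ctr1 α Z ^ (l + 1) = 0 := by
    rw [hZ, hdec]
    exact hl.contractLeft_contract_pow_succ_eq_zero two_ne_zero even_two hV P α hX7
  rw [hgα, len_eq_iff_hasLen two_ne_zero]
  constructor
  · rintro ⟨hle, -⟩
    exact sq_mul_eq_zero_of_pow_three_eq_zero hV hα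
      (hZ ▸ contract_PsiMinus_mem_exteriorPower b.dualBasis hX7) (hpow hle)
  · refine fun hnull => ⟨.two_of_contractLeft_cubic_eq_zero b hα hX7 hX0 hZ hnull hU hΩ hdec,
      fun j hj hlt => contractLeft_contract_PsiMinus_sq_ne_zero b hα hX7 hX0 ?_⟩
    rw [← hZ]
    exact pow_eq_zero_of_le hj (hpow hlt)
end

section
/- Let g be a seven-dimensional real Lie algebra with a six-dimensional abelian ideal u. If g admits a cocalibrated G₂-structure — i.e. there exists a closed four-form Ψ ∈ Λ⁴g* such that for some basis f¹,…,f⁷ of g*, Ψ = f^{1234}+f^{1256}+f^{3456}−f^{2467}+f^{2357}+f^{1457}+f^{1367} — then g also admits a cocalibrated G₂*-structure, i.e. there exists a closed four-form Ψ' ∈ Λ⁴g* such that for some basis h¹,…,h⁷ of g*, Ψ' = h^{1234}−h^{1256}−h^{3456}−h^{2467}+h^{2357}+h^{1457}+h^{1367}. -/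
open Module

section AltMachinery

variable {F : Type*} [Field F] {V : Type*} [AddCommGroup V] [Module F V]

/-- The wedge `φ₁ ∧ … ∧ φ_m` of `m` covectors, as an alternating `m`-form on `V`:
`(φ₁ ∧ … ∧ φ_m)(v₁,…,v_m) = det (φ_i (v_j))`. -/
noncomputable def wedgeCov (m : ℕ) (φ : Fin m → Module.Dual F V) :
    V [⋀^Fin m]→ₗ[F] F :=
  (Matrix.detRowAlternating : (Fin m → F) [⋀^Fin m]→ₗ[F] F).compLinearMap
    (LinearMap.pi φ)

/-- A decomposable alternating `m`-form: a wedge of `m` covectors. -/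
def AltDec (m : ℕ) (X : V [⋀^Fin m]→ₗ[F] F) : Prop :=
  ∃ φ : Fin m → Module.Dual F V, X = wedgeCov m φ

/-- The `m`-form `X` is a sum of `l` decomposable `m`-forms. -/
def AltLenLE (m l : ℕ) (X : V [⋀^Fin m]→ₗ[F] F) : Prop :=
  ∃ Y : Fin l → (V [⋀^Fin m]→ₗ[F] F), (∀ i, AltDec m (Y i)) ∧ X = ∑ i, Y i

/-- The `m`-form `X` has length `l`: it is a sum of `l` decomposable `m`-forms and of no
smaller number of them. -/
def AltHasLen (m l : ℕ) (X : V [⋀^Fin m]→ₗ[F] F) : Prop :=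
  AltLenLE m l X ∧ ∀ j < l, ¬ AltLenLE m j X

end AltMachinery

section CE

variable {F : Type*} [Field F] {g : Type*} [LieRing g] [LieAlgebra F g]

/-- The Chevalley–Eilenberg differential of a `(k+1)`-form (given as a function on tuples):
`(dρ)(x₀,…,x_{k+1}) = ∑_{i<j} (-1)^{i+j} ρ(⁅x_i,x_j⁆, x₀,…,x̂_i,…,x̂_j,…,x_{k+1})`. -/
noncomputable def ceDiff (k : ℕ) (ρ : (Fin (k + 1) → g) → F) : (Fin (k + 2) → g) → F :=
  fun x => ∑ i : Fin (k + 2), ∑ j : Fin (k + 2),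
    if h : (i : ℕ) < (j : ℕ) then
      (-1 : F) ^ ((i : ℕ) + (j : ℕ)) *
        ρ (Fin.cons ⁅x i, x j⁆ fun l : Fin k =>
            x (j.succAbove ((⟨(i : ℕ),
              Nat.lt_of_lt_of_le h (Nat.lt_succ_iff.mp j.isLt)⟩ : Fin (k + 1)).succAbove l)))
    else 0

end CE

section G2Forms

variable {F : Type*} [Field F] {g : Type*} [AddCommGroup g] [Module F g]

/-- The wedge `f^i ∧ f^j ∧ f^k ∧ f^l` of four covectors from the basis `b` of `g*`. -/
noncomputable def bw (b : Basis (Fin 7) F (Module.Dual F g)) (i j k l : Fin 7) :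
    g [⋀^Fin 4]→ₗ[F] F :=
  wedgeCov 4 ![b i, b j, b k, b l]

/-- The four-form `f^{1234}+f^{1256}+f^{3456}-f^{2467}+f^{2357}+f^{1457}+f^{1367}` (the
Hodge dual of a `G₂`- resp. `(G₂)_ℂ`-structure), written with `0`-based indices. -/
noncomputable def stdG2 (b : Basis (Fin 7) F (Module.Dual F g)) : g [⋀^Fin 4]→ₗ[F] F :=
  bw b 0 1 2 3 + bw b 0 1 4 5 + bw b 2 3 4 5 - bw b 1 3 5 6 +
    bw b 1 2 4 6 + bw b 0 3 4 6 + bw b 0 2 5 6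

/-- The four-form `f^{1234}-f^{1256}-f^{3456}-f^{2467}+f^{2357}+f^{1457}+f^{1367}` (the
Hodge dual of a `G₂*`-structure), written with `0`-based indices. -/
noncomputable def stdG2star (b : Basis (Fin 7) F (Module.Dual F g)) :
    g [⋀^Fin 4]→ₗ[F] F :=
  bw b 0 1 2 3 - bw b 0 1 4 5 - bw b 2 3 4 5 - bw b 1 3 5 6 +
    bw b 1 2 4 6 + bw b 0 3 4 6 + bw b 0 2 5 6

/-- Membership in `Λ⁴W ⊆ Λ⁴g*` for a subspace `W ⊆ g*`: the span of the wedges of four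
covectors from `W`. -/
def mem4Pow (W : Submodule F (Module.Dual F g)) (Ω : g [⋀^Fin 4]→ₗ[F] F) : Prop :=
  Ω ∈ Submodule.span F
    {Y : g [⋀^Fin 4]→ₗ[F] F |
      ∃ φ : Fin 4 → Module.Dual F g, (∀ i, φ i ∈ W) ∧ Y = wedgeCov 4 φ}

end G2Forms

/-!
Let `α` be a covector whose kernel is the abelian hyperplane `u`. Each term of `dρ` on a basis
adapted to `u` brackets two vectors of `u`, and so vanishes, or uses up the only vector outside
`u`; hence `dρ` depends only on the restriction of `ρ` to `u`.

The stabiliser of `Ψ` acts transitively on the lines of `g*`, so one may assume that `α` is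
proportional to `f⁷`. To see the transitivity, put `ω = selfDualTriple ![f⁷, f⁶, f³, f¹]` and write
`Ψ = ½ ω₀ ∧ ω₀ + ω₀ ∧ f²⁴ + ω₁ ∧ f²⁵ - ω₂ ∧ f⁴⁵`. Unit quaternions rotate the four-dimensional
coframe without changing `ω`, and a symmetry of order three fixing `f⁷` brings the remaining
coordinates of `α` into that coframe.

Finally, the terms of `Ψ` without `f⁷` are `f¹²³⁴ + f¹²⁵⁶ + f³⁴⁵⁶`, which are also those of the
`G₂*`-form of the coframe with `f⁵` and `f⁶` interchanged. Thus both forms agree on `u`, and they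
have the same differential.
-/

section ChevalleyEilenberg

variable {F : Type*} [Field F] {g : Type*} [LieRing g] {k : ℕ}

theorem castSucc_succAbove_succAbove {i j : Fin (k + 1)} (hij : i ≤ j) (l : Fin k) :
    i.castSucc.succAbove (j.succAbove l) = j.succ.succAbove (i.succAbove l) := by
  have := congrFun (Fin.removeNth_removeNth_eq_swap (fun m : Fin (k + 2) => m) j i.castSucc) l
  simpa [Fin.removeNth, Fin.predAbove, Fin.succAbove_of_le_castSucc, hij, hij.not_gt] using this

theorem ceDiff_eq_neg_sum_Ici (ρ : (Fin (k + 1) → g) → F) (x : Fin (k + 2) → g) :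
    ceDiff k ρ x = -∑ i : Fin (k + 1), ∑ j ≥ i, (-1) ^ (i + j : ℕ) *
      ρ (Matrix.vecCons ⁅x i.castSucc, x j.succ⁆ (j.removeNth (i.castSucc.removeNth x))) := by
  have hlast (j : Fin (k + 2)) : ¬ k + 1 < (j : ℕ) := by omega
  have hle (i j : Fin (k + 1)) : (i : ℕ) < (j : ℕ) + 1 ↔ i ≤ j := by omega
  rw [ceDiff, Fin.sum_univ_castSucc, ← Finset.sum_neg_distrib]
  simp only [Fin.val_castSucc, Fin.val_last, hlast, dite_false, Finset.sum_const_zero, add_zero]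
  refine Finset.sum_congr rfl fun i _ => ?_
  rw [← Finset.filter_le_eq_Ici, Finset.sum_filter, ← Finset.sum_neg_distrib]
  simp only [Fin.sum_univ_succ (n := k + 1), Fin.val_zero, Fin.val_succ, Nat.not_lt_zero, hle]
  refine (zero_add _).trans ?_
  refine Finset.sum_congr rfl fun j _ => ?_
  split_ifs with hij
  · have hrem : j.removeNth (i.castSucc.removeNth x) =
        fun l => x (j.succ.succAbove (i.succAbove l)) :=
      funext fun l => congrArg x (castSucc_succAbove_succAbove hij l)
    rw [hrem, ← add_assoc, pow_succ, mul_neg_one, neg_mul]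
    rfl
  · exact neg_zero.symm

variable [LieAlgebra F g]

open AlternatingMap in
theorem two_mul_ceDiff (ρ : g [⋀^Fin (k + 1)]→ₗ[F] F) (x : Fin (k + 2) → g) :
    2 * ceDiff k ρ x = -alternatizeUncurryFin (alternatizeUncurryFinLM ∘ₗ
      (LieModule.toEnd F g g : g →ₗ[F] Module.End F g).compr₂ ρ.curryLeft) x := by
  rw [alternatizeUncurryFin_alternatizeUncurryFinLM_comp_apply, ceDiff_eq_neg_sum_Ici, mul_neg,
    Finset.mul_sum]
  congr 1
  refine Finset.sum_congr rfl fun i _ => ?_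
  rw [Finset.mul_sum]
  refine Finset.sum_congr rfl fun j _ => ?_
  have hskew : ρ.curryLeft ⁅x j.succ, x i.castSucc⁆ = -ρ.curryLeft ⁅x i.castSucc, x j.succ⁆ := by
    rw [← lie_skew, map_neg]
  simp only [LinearMap.compr₂_apply, LieHom.coe_toLinearMap, LieModule.toEnd_apply_apply, hskew,
    AlternatingMap.neg_apply, sub_neg_eq_add, AlternatingMap.curryLeft_apply_apply, zsmul_eq_mul]
  push_cast
  ring

theorem exists_alternatingMap_coe_eq_ceDiff [NeZero (2 : F)] (ρ : g [⋀^Fin (k + 1)]→ₗ[F] F) :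
    ∃ ω : g [⋀^Fin (k + 2)]→ₗ[F] F, ⇑ω = ceDiff k ρ := by
  obtain ⟨ω, hω⟩ : ∃ ω : g [⋀^Fin (k + 2)]→ₗ[F] F, ∀ x, 2 * ceDiff k ρ x = -ω x :=
    ⟨_, two_mul_ceDiff ρ⟩
  refine ⟨(2 : F)⁻¹ • -ω, funext fun x => ?_⟩
  rw [AlternatingMap.smul_apply, AlternatingMap.neg_apply, ← hω, smul_eq_mul,
    inv_mul_cancel_left₀ two_ne_zero]

theorem ceDiff_congr_of_eqOn_abelian_ideal [NeZero (2 : F)] {ι : Type*} (B : Basis ι F g) (i₀ : ι)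
    {u : LieIdeal F g} (hu : ∀ x ∈ u, ∀ y ∈ u, ⁅x, y⁆ = 0) (hB : ∀ i ≠ i₀, B i ∈ u)
    {ρ ρ' : g [⋀^Fin (k + 1)]→ₗ[F] F} (hρ : ∀ v, (∀ i, v i ∈ u) → ρ v = ρ' v) :
    ceDiff k ρ = ceDiff k ρ' := by
  obtain ⟨ω, hω⟩ := exists_alternatingMap_coe_eq_ceDiff ρ
  obtain ⟨ω', hω'⟩ := exists_alternatingMap_coe_eq_ceDiff ρ'
  suffices ω = ω' by rw [← hω, ← hω', this]
  refine B.ext_alternating fun v hv => ?_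
  rw [hω, hω', ceDiff_eq_neg_sum_Ici, ceDiff_eq_neg_sum_Ici]
  congr 1
  refine Finset.sum_congr rfl fun i _ => Finset.sum_congr rfl fun j hj => congrArg _ ?_
  have hij : v i.castSucc ≠ v j.succ :=
    hv.ne (Fin.castSucc_lt_succ_iff.2 (Finset.mem_Ici.1 hj)).ne
  by_cases hrest : ∀ l, v (i.castSucc.succAbove (j.succAbove l)) ≠ i₀
  · have hlie : ⁅B (v i.castSucc), B (v j.succ)⁆ ∈ u := by
      by_cases hi : v i.castSucc = i₀
      · exact lie_mem_right F g u _ _ (hB _ (hi ▸ hij.symm))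
      · exact lie_mem_left F g u _ _ (hB _ hi)
    exact hρ _ (Fin.cases hlie fun l => hB _ (hrest l))
  · push Not at hrest
    obtain ⟨l, rfl⟩ := hrest
    have hi : v i.castSucc ≠ v (i.castSucc.succAbove (j.succAbove l)) :=
      hv.ne (Fin.succAbove_ne _ _).symm
    have hj : v j.succ ≠ v (i.castSucc.succAbove (j.succAbove l)) := by
      rw [← Fin.succAbove_of_le_castSucc i.castSucc j
        (Fin.castSucc_le_castSucc_iff.2 (Finset.mem_Ici.1 hj))]
      exact hv.ne (Fin.succAbove_right_injective.ne (Fin.succAbove_ne _ _).symm)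
    have hlie : ⁅B (v i.castSucc), B (v j.succ)⁆ = 0 := hu _ (hB _ hi) _ (hB _ hj)
    exact (ρ.map_coord_zero 0 hlie).trans (ρ'.map_coord_zero 0 hlie).symm

end ChevalleyEilenberg

section Duality

theorem exists_dual_ker_eq_of_finrank_add_one_eq {F : Type*} [Field F] {V : Type*} [AddCommGroup V]
    [Module F V] [FiniteDimensional F V] {W : Submodule F V}
    (hW : finrank F W + 1 = finrank F V) : ∃ α : Dual F V, α ≠ 0 ∧ LinearMap.ker α = W := by
  have hlt : W < ⊤ := Submodule.lt_top_of_finrank_lt_finrank (by omega)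
  obtain ⟨α, hα, hle⟩ := Submodule.exists_le_ker_of_lt_top W hlt
  have hker := Dual.finrank_ker_add_one_of_ne_zero hα
  exact ⟨α, hα, (Submodule.eq_of_le_of_finrank_eq hle (by omega)).symm⟩

theorem exists_basis_dualBasis_eq_s19 {R : Type*} [CommRing R] {M : Type*} [AddCommGroup M]
    [Module R M] [IsReflexive R M] {ι : Type*} [Finite ι] [DecidableEq ι]
    (b : Basis ι R (Dual R M)) : ∃ B : Basis ι R M, B.dualBasis = b := by
  let B : Basis ι R M := b.dualBasis.map (evalEquiv R M).symm
  refine ⟨B, DFunLike.ext _ _ fun i => B.ext fun j => ?_⟩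
  rw [Basis.dualBasis_apply_self, Basis.map_apply, apply_evalEquiv_symm_apply,
    Basis.dualBasis_apply_self]
  simp only [eq_comm]

end Duality

section Quaternion

variable {R : Type*} [CommRing R] {M : Type*} [AddCommGroup M] [Module R M]

/-- The frame `e` of a four-space, read as the quaternion units `1, i, j, k`, rotated by
multiplication with the quaternion `x`, so that its first member becomes `∑ i, x i • e i`. -/
def quatRotate (x : Fin 4 → R) (e : Fin 4 → M) : Fin 4 → M :=
  ![x 0 • e 0 + x 1 • e 1 + x 2 • e 2 + x 3 • e 3,
    x 0 • e 1 - x 1 • e 0 + x 2 • e 3 - x 3 • e 2,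
    x 0 • e 2 - x 1 • e 3 - x 2 • e 0 + x 3 • e 1,
    x 0 • e 3 + x 1 • e 2 - x 2 • e 1 - x 3 • e 0]

theorem quatRotate_mem {x : Fin 4 → R} {e : Fin 4 → M} {S : Submodule R M} (he : ∀ i, e i ∈ S)
    (i : Fin 4) : quatRotate x e i ∈ S := by
  have hsmul (j k : Fin 4) : x j • e k ∈ S := S.smul_mem _ (he k)
  fin_cases i
  · exact S.add_mem (S.add_mem (S.add_mem (hsmul 0 0) (hsmul 1 1)) (hsmul 2 2)) (hsmul 3 3)
  · exact S.sub_mem (S.add_mem (S.sub_mem (hsmul 0 1) (hsmul 1 0)) (hsmul 2 3)) (hsmul 3 2)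
  · exact S.add_mem (S.sub_mem (S.sub_mem (hsmul 0 2) (hsmul 1 3)) (hsmul 2 0)) (hsmul 3 1)
  · exact S.sub_mem (S.sub_mem (S.add_mem (hsmul 0 3) (hsmul 1 2)) (hsmul 2 1)) (hsmul 3 0)

theorem quatRotate_conj_quatRotate {x : Fin 4 → R} (hx : ∑ i, x i ^ 2 = 1) (e : Fin 4 → M) :
    quatRotate ![x 0, -x 1, -x 2, -x 3] (quatRotate x e) = e := by
  rw [Fin.sum_univ_four] at hx
  funext i
  calc quatRotate ![x 0, -x 1, -x 2, -x 3] (quatRotate x e) i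
      = (x 0 ^ 2 + x 1 ^ 2 + x 2 ^ 2 + x 3 ^ 2) • e i := by
        fin_cases i <;> simp only [quatRotate, Fin.zero_eta, Fin.mk_one, Fin.reduceFinMk,
          Matrix.cons_val] <;> module
    _ = e i := by rw [hx, one_smul]

end Quaternion

section TwoForms

variable {F : Type*} [Field F] {g : Type*} [AddCommGroup g] [Module F g]

/-- The exterior product `p ∧ q` of two covectors, as a plain function of two vectors. -/
def wedgeTwo (p q : Dual F g) : g → g → F := fun x y => p x * q y - p y * q x

/-- The exterior product `A ∧ B` of two 2-forms given as plain functions; the formula presupposes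
that `A` and `B` are alternating. -/
def twoFormWedge (A B : g → g → F) (v : Fin 4 → g) : F :=
  A (v 0) (v 1) * B (v 2) (v 3) - A (v 0) (v 2) * B (v 1) (v 3) + A (v 0) (v 3) * B (v 1) (v 2) +
    A (v 1) (v 2) * B (v 0) (v 3) - A (v 1) (v 3) * B (v 0) (v 2) + A (v 2) (v 3) * B (v 0) (v 1)

theorem wedgeCov_four_apply (p q r s : Dual F g) (v : Fin 4 → g) :
    wedgeCov 4 ![p, q, r, s] v = twoFormWedge (wedgeTwo p q) (wedgeTwo r s) v := by
  change Matrix.det (Matrix.of fun j i => (![p, q, r, s] : Fin 4 → Dual F g) i (v j)) = _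
  rw [Matrix.det_succ_row_zero, Fin.sum_univ_four]
  simp only [Matrix.det_fin_three, Matrix.submatrix_apply, Matrix.of_apply, Fin.succAbove,
    Fin.reduceSucc, Fin.reduceCastSucc, Fin.reduceLT, Matrix.cons_val, Fin.coe_ofNat_eq_mod,
    if_true, if_false, twoFormWedge, wedgeTwo]
  ring

/-- The hyperkähler triple `e⁰¹ + e²³`, `e⁰² + e³¹`, `e⁰³ + e¹²` spanning the self-dual 2-forms of
the coframe `e` of a four-space. -/
def selfDualTriple (e : Fin 4 → Dual F g) : Fin 3 → g → g → F :=
  ![wedgeTwo (e 0) (e 1) + wedgeTwo (e 2) (e 3),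
    wedgeTwo (e 0) (e 2) + wedgeTwo (e 3) (e 1),
    wedgeTwo (e 0) (e 3) + wedgeTwo (e 1) (e 2)]

theorem selfDualTriple_quatRotate {x : Fin 4 → F} (hx : ∑ i, x i ^ 2 = 1)
    (e : Fin 4 → Dual F g) : selfDualTriple (quatRotate x e) = selfDualTriple e := by
  rw [Fin.sum_univ_four] at hx
  funext i y z
  calc selfDualTriple (quatRotate x e) i y z
      = (x 0 ^ 2 + x 1 ^ 2 + x 2 ^ 2 + x 3 ^ 2) * selfDualTriple e i y z := by
        fin_cases i <;> simp only [quatRotate, selfDualTriple, wedgeTwo, Fin.zero_eta, Fin.mk_one,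
          Fin.reduceFinMk, Matrix.cons_val, Pi.add_apply, LinearMap.add_apply,
          LinearMap.sub_apply, LinearMap.smul_apply, smul_eq_mul] <;> ring
    _ = selfDualTriple e i y z := by rw [hx, one_mul]

theorem stdG2_apply (b : Basis (Fin 7) F (Dual F g)) (v : Fin 4 → g) :
    stdG2 b v =
      twoFormWedge (wedgeTwo (b 0) (b 1)) (wedgeTwo (b 2) (b 3)) v +
        twoFormWedge (wedgeTwo (b 0) (b 1)) (wedgeTwo (b 4) (b 5)) v +
        twoFormWedge (wedgeTwo (b 2) (b 3)) (wedgeTwo (b 4) (b 5)) v -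
        twoFormWedge (wedgeTwo (b 1) (b 3)) (wedgeTwo (b 5) (b 6)) v +
        twoFormWedge (wedgeTwo (b 1) (b 2)) (wedgeTwo (b 4) (b 6)) v +
        twoFormWedge (wedgeTwo (b 0) (b 3)) (wedgeTwo (b 4) (b 6)) v +
        twoFormWedge (wedgeTwo (b 0) (b 2)) (wedgeTwo (b 5) (b 6)) v := by
  simp only [stdG2, bw, AlternatingMap.add_apply, AlternatingMap.sub_apply, wedgeCov_four_apply]

theorem stdG2_apply_eq_twoFormWedge_selfDualTriple [NeZero (2 : F)]
    (b : Basis (Fin 7) F (Dual F g)) (v : Fin 4 → g) :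
    stdG2 b v =
      2⁻¹ * twoFormWedge (selfDualTriple ![b 6, b 5, b 2, b 0] 0)
          (selfDualTriple ![b 6, b 5, b 2, b 0] 0) v +
        twoFormWedge (selfDualTriple ![b 6, b 5, b 2, b 0] 0) (wedgeTwo (b 1) (b 3)) v +
        twoFormWedge (selfDualTriple ![b 6, b 5, b 2, b 0] 1) (wedgeTwo (b 1) (b 4)) v -
        twoFormWedge (selfDualTriple ![b 6, b 5, b 2, b 0] 2) (wedgeTwo (b 3) (b 4)) v := by
  simp only [stdG2_apply, selfDualTriple, twoFormWedge, wedgeTwo, Matrix.cons_val,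
    Pi.add_apply]
  field_simp
  ring

theorem stdG2_congr_of_selfDualTriple [NeZero (2 : F)]
    {b b' : Basis (Fin 7) F (Dual F g)}
    (h : selfDualTriple ![b' 6, b' 5, b' 2, b' 0] = selfDualTriple ![b 6, b 5, b 2, b 0])
    (h₁ : b' 1 = b 1) (h₃ : b' 3 = b 3) (h₄ : b' 4 = b 4) : stdG2 b' = stdG2 b := by
  ext v
  simp only [stdG2_apply_eq_twoFormWedge_selfDualTriple, h, h₁, h₃, h₄]

theorem exists_stdG2_eq_and_six_eq_of_sum_sq_eq_one [NeZero (2 : F)]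
    (b : Basis (Fin 7) F (Dual F g)) {x : Fin 4 → F} (hx : ∑ i, x i ^ 2 = 1) :
    ∃ b' : Basis (Fin 7) F (Dual F g), stdG2 b' = stdG2 b ∧
      b' 6 = x 0 • b 6 + x 1 • b 5 + x 2 • b 2 + x 3 • b 0 ∧
      b' 1 = b 1 ∧ b' 3 = b 3 ∧ b' 4 = b 4 := by
  let e : Fin 4 → Dual F g := ![b 6, b 5, b 2, b 0]
  let f : Fin 4 → Dual F g := quatRotate x e
  let c : Fin 7 → Dual F g := ![f 3, b 1, f 2, b 3, b 4, f 1, f 0]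
  let S : Submodule F (Dual F g) := Submodule.span F (Set.range c)
  have hc (i : Fin 7) : c i ∈ S := Submodule.subset_span ⟨i, rfl⟩
  have hf (i : Fin 4) : f i ∈ S := by
    fin_cases i
    exacts [hc 6, hc 5, hc 2, hc 0]
  have he (i : Fin 4) : e i ∈ S :=
    quatRotate_conj_quatRotate hx e ▸ quatRotate_mem hf i
  have hspan : ⊤ ≤ S := by
    rw [← b.span_eq, Submodule.span_le, Set.range_subset_iff]
    intro i
    fin_cases i
    exacts [he 3, hc 1, he 2, hc 3, hc 4, he 1, he 0]
  have hcard : Fintype.card (Fin 7) = finrank F (Dual F g) := (finrank_eq_card_basis b).symm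
  have hb' := coe_basisOfTopLeSpanOfCardEqFinrank c hspan hcard
  refine ⟨basisOfTopLeSpanOfCardEqFinrank c hspan hcard, stdG2_congr_of_selfDualTriple ?_ ?_ ?_ ?_,
    ?_, ?_, ?_, ?_⟩ <;> rw [hb']
  · exact selfDualTriple_quatRotate hx e
  all_goals rfl

/-- A symmetry of order three of the Fano plane underlying `stdG2`: it fixes the last index and
permutes cyclically the three terms of `stdG2` that do not contain it. -/
def stdG2Symm : Equiv.Perm (Fin 7) := c[0, 4, 2] * c[1, 5, 3]

theorem reindex_stdG2Symm_apply (b : Basis (Fin 7) F (Dual F g)) (i : Fin 7) :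
    b.reindex stdG2Symm i = b (![2, 3, 4, 5, 0, 1, 6] i) := by
  rw [Basis.reindex_apply]
  fin_cases i <;> rfl

theorem stdG2_reindex_stdG2Symm (b : Basis (Fin 7) F (Dual F g)) :
    stdG2 (b.reindex stdG2Symm) = stdG2 b := by
  ext v
  simp only [stdG2_apply, reindex_stdG2Symm_apply, twoFormWedge, wedgeTwo, Matrix.cons_val]
  ring

theorem stdG2star_reindex_swap_apply_of_six_eq_zero (b : Basis (Fin 7) F (Dual F g)) {v : Fin 4 → g}
    (hv : ∀ i, b 6 (v i) = 0) : stdG2star (b.reindex (Equiv.swap 4 5)) v = stdG2 b v := by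
  have hreindex (i : Fin 7) :
      b.reindex (Equiv.swap 4 5) i = b (![0, 1, 2, 3, 5, 4, 6] i) := by
    rw [Basis.reindex_apply]
    fin_cases i <;> rfl
  simp only [stdG2_apply, stdG2star, bw, AlternatingMap.add_apply, AlternatingMap.sub_apply,
    wedgeCov_four_apply, hreindex, twoFormWedge, wedgeTwo, Matrix.cons_val, hv]
  ring

end TwoForms

section OrderedField

variable {F : Type*} [Field F] [LinearOrder F] [IsStrictOrderedRing F]
  {g : Type*} [AddCommGroup g] [Module F g]

theorem exists_stdG2_eq_and_linearCombination_eq_smul_six (hF : ∀ a : F, IsSumSq a → IsSquare a)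
    (b : Basis (Fin 7) F (Dual F g)) (x : Fin 4 → F) :
    ∃ (b' : Basis (Fin 7) F (Dual F g)) (t : F), stdG2 b' = stdG2 b ∧
      x 0 • b 6 + x 1 • b 5 + x 2 • b 2 + x 3 • b 0 = t • b' 6 ∧
      b' 1 = b 1 ∧ b' 3 = b 3 ∧ b' 4 = b 4 := by
  obtain ⟨n, hn⟩ : IsSquare (∑ i, x i ^ 2) :=
    hF _ (IsSumSq.sum fun i _ => (IsSquare.sq (x i)).isSumSq)
  obtain rfl | hn₀ := eq_or_ne n 0
  · have hx (i : Fin 4) : x i = 0 := by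
      have hsq : x i ^ 2 = 0 := (Finset.sum_eq_zero_iff_of_nonneg fun i _ => sq_nonneg (x i)).1
        (hn.trans (mul_zero 0)) i (Finset.mem_univ i)
      exact sq_eq_zero_iff.1 hsq
    exact ⟨b, 0, rfl, by simp only [hx, zero_smul, add_zero], rfl, rfl, rfl⟩
  · have hunit : ∑ i, (x i / n) ^ 2 = 1 := by
      simp only [div_pow, ← Finset.sum_div]
      rw [hn, ← sq, div_self (pow_ne_zero 2 hn₀)]
    obtain ⟨b', hG, h₆, h⟩ := exists_stdG2_eq_and_six_eq_of_sum_sq_eq_one b hunit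
    refine ⟨b', n, hG, ?_, h⟩
    simp only [h₆, smul_add, smul_smul, mul_div_cancel₀ _ hn₀]

theorem exists_stdG2_eq_and_eq_smul_six (hF : ∀ a : F, IsSumSq a → IsSquare a)
    (b : Basis (Fin 7) F (Dual F g)) (α : Dual F g) :
    ∃ (b' : Basis (Fin 7) F (Dual F g)) (t : F), stdG2 b' = stdG2 b ∧ α = t • b' 6 := by
  let a : Fin 7 → F := b.repr α
  have hα : ∑ i, a i • b i = α := b.sum_repr α
  rw [Fin.sum_univ_seven] at hα
  obtain ⟨b₁, t₁, hG₁, h₁, h₁₁, h₁₃, h₁₄⟩ :=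
    exists_stdG2_eq_and_linearCombination_eq_smul_six hF b ![a 6, a 5, a 2, a 0]
  obtain ⟨b₂, t₂, hG₂, h₂, h₂₁, -, -⟩ :=
    exists_stdG2_eq_and_linearCombination_eq_smul_six hF (b₁.reindex stdG2Symm) ![t₁, a 1, a 4, 0]
  obtain ⟨b₃, t₃, hG₃, h₃, -, -, -⟩ :=
    exists_stdG2_eq_and_linearCombination_eq_smul_six hF (b₂.reindex stdG2Symm) ![t₂, a 3, 0, 0]
  rw [stdG2_reindex_stdG2Symm] at hG₂ hG₃
  simp only [reindex_stdG2Symm_apply] at h₂ h₂₁ h₃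
  refine ⟨b₃, t₃, hG₃.trans (hG₂.trans hG₁), ?_⟩
  calc α = a 6 • b 6 + a 5 • b 5 + a 2 • b 2 + a 0 • b 0 +
        (a 1 • b₁ 1 + a 3 • b₁ 3 + a 4 • b₁ 4) := by
        rw [← hα, h₁₁, h₁₃, h₁₄]
        abel
    _ = t₁ • b₁ 6 + a 1 • b₁ 1 + a 4 • b₁ 4 + (0 : F) • b₁ 2 + a 3 • b₁ 3 := by
        simp only [← h₁, Matrix.cons_val]
        module
    _ = t₂ • b₂ 6 + a 3 • b₂ 1 + (0 : F) • b₂ 4 + (0 : F) • b₂ 2 := by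
        simp only [← h₂, h₂₁, Matrix.cons_val, zero_smul, add_zero]
    _ = t₃ • b₃ 6 := h₃

end OrderedField

theorem stmt19_general {F : Type*} [Field F] [LinearOrder F] [IsStrictOrderedRing F]
    (hF : ∀ a : F, IsSumSq a → IsSquare a) {g : Type*} [LieRing g] [LieAlgebra F g]
    (hg : finrank F g = 7)
    (u : LieIdeal F g) (habel : ∀ x ∈ u, ∀ y ∈ u, ⁅x, y⁆ = (0 : g))
    (hu : finrank F u = 6)
    (hG2 : ∃ Ψ : g [⋀^Fin 4]→ₗ[F] F, ceDiff 3 ⇑Ψ = 0 ∧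
      ∃ b : Basis (Fin 7) F (Dual F g), Ψ = stdG2 b) :
    ∃ Ψ' : g [⋀^Fin 4]→ₗ[F] F, ceDiff 3 ⇑Ψ' = 0 ∧
      ∃ b' : Basis (Fin 7) F (Dual F g), Ψ' = stdG2star b' := by
  have : FiniteDimensional F g := .of_finrank_eq_succ hg
  obtain ⟨_, hclosed, b, rfl⟩ := hG2
  obtain ⟨α, hα₀, hα⟩ := exists_dual_ker_eq_of_finrank_add_one_eq (W := u.toSubmodule)
    (hg ▸ congrArg (· + 1) hu)
  obtain ⟨b', t, hG, rfl⟩ := exists_stdG2_eq_and_eq_smul_six hF b α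
  have hu_iff (x : g) : x ∈ u ↔ b' 6 x = 0 := by
    rw [← LieSubmodule.mem_toSubmodule, ← hα, LinearMap.mem_ker, LinearMap.smul_apply,
      smul_eq_zero_iff_right (left_ne_zero_of_smul hα₀)]
  obtain ⟨B, hB⟩ := exists_basis_dualBasis_eq_s19 b'
  have hBu (i : Fin 7) (hi : i ≠ 6) : B i ∈ u := by
    rw [hu_iff, ← hB, Basis.dualBasis_apply_self, if_neg hi]
  refine ⟨stdG2star (b'.reindex (Equiv.swap 4 5)), ?_, _, rfl⟩
  rw [← hclosed, ← hG]
  exact ceDiff_congr_of_eqOn_abelian_ideal B 6 habel hBu fun v hv =>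
    stdG2star_reindex_swap_apply_of_six_eq_zero b' fun i => (hu_iff _).1 (hv i)

/-- Let `g` be a seven-dimensional real Lie algebra with a
six-dimensional abelian ideal `u`.  If `g` admits a cocalibrated `G₂`-structure (a
closed four-form of the standard type `stdG2`), then it also admits a cocalibrated
`G₂*`-structure (a closed four-form of the standard type `stdG2star`). -/
theorem stmt19 {g : Type*} [LieRing g] [LieAlgebra ℝ g] [FiniteDimensional ℝ g]
    (hg : finrank ℝ g = 7)
    (u : LieIdeal ℝ g) (habel : ∀ x ∈ u, ∀ y ∈ u, ⁅x, y⁆ = (0 : g))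
    (hu : finrank ℝ ↥u = 6)
    (hG2 : ∃ Ψ : g [⋀^Fin 4]→ₗ[ℝ] ℝ, ceDiff 3 ⇑Ψ = 0 ∧
      ∃ b : Basis (Fin 7) ℝ (Module.Dual ℝ g), Ψ = stdG2 b) :
    ∃ Ψ' : g [⋀^Fin 4]→ₗ[ℝ] ℝ, ceDiff 3 ⇑Ψ' = 0 ∧
      ∃ b' : Basis (Fin 7) ℝ (Module.Dual ℝ g), Ψ' = stdG2star b' :=
  stmt19_general (fun _ ha => Real.isSquare_iff.2 ha.nonneg) hg u habel hu hG2
end
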